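/- arXiv:2401.10847 — 3 statements merged into one kernel-verified Lean document; each statement's English description precedes it below -/
import Mathlib

section
/- Let F be a finite graph with at least one edge and let T be a tree such that every graph T+e obtained by adding an edge between two non-adjacent vertices of T, and every graph 2T+e obtained from the disjoint union of two copies of T by adding an edge with one endpoint in each copy, contains a connected component of F that is not contained in T. Then for every residue class C modulo |V(T)| there exists an F-saturated blueprint (H,T) with |V(H)| ∈ C. -/
open SimpleGraph Filter Topology

/-- `H` (on `β`) is contained in `G` (on `α`): `G` has a subgraph isomorphic to `H`. -/
def Contains {α β : Type*} (G : SimpleGraph α) (H : SimpleGraph β) : Prop :=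
  ∃ f : β ↪ α, ∀ a b : β, H.Adj a b → G.Adj (f a) (f b)

/-- `G` is `F`-saturated: `G` does not contain `F`, but adding any missing edge creates `F`. -/
def SatSingle {γ α : Type*} (F : SimpleGraph γ) (G : SimpleGraph α) : Prop :=
  (¬ Contains G F) ∧
    ∀ u v : α, u ≠ v → ¬ G.Adj u v → Contains (G ⊔ SimpleGraph.fromEdgeSet {s(u, v)}) F

/-- The disjoint union of two graphs. -/
def disjUnionG {α β : Type*} (G : SimpleGraph α) (H : SimpleGraph β) : SimpleGraph (α ⊕ β) :=
  SimpleGraph.fromRel (fun x y =>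
    match x, y with
    | Sum.inl a, Sum.inl b => G.Adj a b
    | Sum.inr a, Sum.inr b => H.Adj a b
    | _, _ => False)

/-- `H ∪ kT`: the disjoint union of `H` with `k` copies of `T`. -/
def unionCopies {α β : Type*} (H : SimpleGraph α) (k : ℕ) (T : SimpleGraph β) :
    SimpleGraph (α ⊕ Fin k × β) :=
  SimpleGraph.fromRel (fun x y =>
    match x, y with
    | Sum.inl a, Sum.inl b => H.Adj a b
    | Sum.inr (i, a), Sum.inr (j, b) => i = j ∧ T.Adj a b
    | _, _ => False)

/-- `T` is a tree such that every graph `T+e` (obtained by adding an edge between two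
non-adjacent vertices of `T`) and every graph `2T+e` (obtained from the disjoint union of two
copies of `T` by adding an edge with one endpoint in each copy) contains a connected component of
`F` that is not contained in `T`. -/
def GoodTree {nF : ℕ} (F : SimpleGraph (Fin nF)) (t : ℕ) (T : SimpleGraph (Fin t)) : Prop :=
  T.IsTree ∧
  (∀ u v : Fin t, u ≠ v → ¬ T.Adj u v →
    ∃ c : F.ConnectedComponent, ¬ Contains T (SimpleGraph.induce c.supp F) ∧
      Contains (T ⊔ SimpleGraph.fromEdgeSet {s(u, v)}) (SimpleGraph.induce c.supp F)) ∧
  (∀ u v : Fin t,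
    ∃ c : F.ConnectedComponent, ¬ Contains T (SimpleGraph.induce c.supp F) ∧
      Contains (disjUnionG T T ⊔ SimpleGraph.fromEdgeSet {s(Sum.inl u, Sum.inr v)})
        (SimpleGraph.induce c.supp F))


section Basic

variable {α β γ : Type*}

@[simp]
lemma unionCopies_adj_inl_inl (H : SimpleGraph α) (k : ℕ) (T : SimpleGraph β) (a b : α) :
    (unionCopies H k T).Adj (Sum.inl a) (Sum.inl b) ↔ H.Adj a b := by
  simp only [unionCopies, fromRel_adj, ne_eq, Sum.inl.injEq]
  exact ⟨fun h => h.2.elim id fun h' => h'.symm, fun h => ⟨h.ne, Or.inl h⟩⟩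

@[simp]
lemma unionCopies_adj_inr_inr (H : SimpleGraph α) (k : ℕ) (T : SimpleGraph β)
    (x y : Fin k × β) :
    (unionCopies H k T).Adj (Sum.inr x) (Sum.inr y) ↔ x.1 = y.1 ∧ T.Adj x.2 y.2 := by
  obtain ⟨i, a⟩ := x
  obtain ⟨j, b⟩ := y
  simp only [unionCopies, fromRel_adj, ne_eq, Sum.inr.injEq, Prod.mk.injEq]
  refine ⟨fun h => h.2.elim id fun h' => ⟨h'.1.symm, h'.2.symm⟩, fun h => ⟨?_, Or.inl h⟩⟩
  exact fun h' => h.2.ne h'.2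

@[simp]
lemma unionCopies_adj_inl_inr (H : SimpleGraph α) (k : ℕ) (T : SimpleGraph β)
    (a : α) (y : Fin k × β) : ¬ (unionCopies H k T).Adj (Sum.inl a) (Sum.inr y) := by
  simp [unionCopies]

@[simp]
lemma unionCopies_adj_inr_inl (H : SimpleGraph α) (k : ℕ) (T : SimpleGraph β)
    (a : α) (y : Fin k × β) : ¬ (unionCopies H k T).Adj (Sum.inr y) (Sum.inl a) := by
  simp [unionCopies]

/-- `f` restricts to an embedding of the subgraph of `F` induced on `s` into `G`. -/
def IsEmbOn (F : SimpleGraph γ) (s : Set γ) (G : SimpleGraph α) (f : γ → α) : Prop :=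
  Set.InjOn f s ∧ ∀ a ∈ s, ∀ b ∈ s, F.Adj a b → G.Adj (f a) (f b)

lemma IsEmbOn.mono {F : SimpleGraph γ} {s s' : Set γ} {G : SimpleGraph α} {f : γ → α}
    (h : IsEmbOn F s G f) (hs : s' ⊆ s) : IsEmbOn F s' G f :=
  ⟨h.1.mono hs, fun a ha b hb => h.2 a (hs ha) b (hs hb)⟩

lemma contains_induce_iff [Nonempty α] (F : SimpleGraph γ) (s : Set γ) (G : SimpleGraph α) :
    Contains G (SimpleGraph.induce s F) ↔ ∃ f, IsEmbOn F s G f := by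
  classical
  constructor
  · rintro ⟨f, hf⟩
    refine ⟨fun x => if h : x ∈ s then f ⟨x, h⟩ else Classical.arbitrary α, ?_, ?_⟩
    · intro a ha b hb hab
      simp only [ha, hb, dif_pos] at hab
      simpa using f.injective hab
    · intro a ha b hb hab
      simp only [ha, hb, dif_pos]
      exact hf _ _ hab
  · rintro ⟨f, hf, hf'⟩
    exact ⟨⟨fun x => f x, fun x y h => Subtype.ext (hf x.2 y.2 h)⟩,
      fun a b hab => hf' a a.2 b b.2 hab⟩

/-- The vertices lying in a connected component of `F` that is not contained in `T`. -/
def bigVerts (F : SimpleGraph γ) (T : SimpleGraph β) : Set γ :=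
  {v | ¬ Contains T (SimpleGraph.induce (F.connectedComponentMk v).supp F)}

lemma mem_bigVerts_of_mem {F : SimpleGraph γ} {T : SimpleGraph β} {c : F.ConnectedComponent}
    (hc : ¬ Contains T (SimpleGraph.induce c.supp F)) {v : γ} (hv : v ∈ c.supp) :
    v ∈ bigVerts F T := by
  rw [ConnectedComponent.mem_supp_iff] at hv
  subst hv
  exact hc

lemma mem_bigVerts_of_adj {F : SimpleGraph γ} {T : SimpleGraph β} {v w : γ} (h : F.Adj v w)
    (hv : v ∈ bigVerts F T) : w ∈ bigVerts F T :=
  mem_bigVerts_of_mem hv ((ConnectedComponent.mem_supp_congr_adj _ h).1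
    ConnectedComponent.connectedComponentMk_mem)

lemma mem_of_mem_component {F : SimpleGraph γ} {c : F.ConnectedComponent} {P : Set γ}
    (hP : ∀ a b, a ∈ c.supp → F.Adj a b → a ∈ P → b ∈ P) {a b : γ} (ha : a ∈ c.supp)
    (hb : b ∈ c.supp) (haP : a ∈ P) : b ∈ P := by
  obtain ⟨w⟩ := c.reachable_of_mem_supp ha hb
  induction w with
  | nil => exact haP
  | cons h _ ih =>
    exact ih ((ConnectedComponent.mem_supp_congr_adj _ h).1 ha) hb (hP _ _ ha h haP)

lemma exists_adj_of_mem_bigVerts [Nonempty β] {F : SimpleGraph γ} {T : SimpleGraph β} {v : γ}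
    (hv : v ∈ bigVerts F T) : ∃ w, F.Adj v w := by
  by_contra! h
  have key : ∀ x ∈ (F.connectedComponentMk v).supp, x = v := fun x hx =>
    mem_of_mem_component (P := {v}) (fun a b _ hab ha => by
      rw [Set.mem_singleton_iff] at ha
      subst ha
      exact (h b hab).elim) ConnectedComponent.connectedComponentMk_mem hx rfl
  refine hv ((contains_induce_iff _ _ _).2 ⟨fun _ => Classical.arbitrary β, ?_, ?_⟩)
  · intro a ha b hb _
    rw [key a ha, key b hb]
  · intro a ha b hb hab
    rw [key a ha, key b hb] at hab
    exact (F.loopless.irrefl v hab).elim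

/-- Vertices of components not contained in `T` avoid the copies of `T`. -/
lemma exists_inl_of_mem_bigVerts [Nonempty β] {F : SimpleGraph γ} {T : SimpleGraph β}
    {H : SimpleGraph α} {M : ℕ} {f : γ ↪ α ⊕ Fin M × β}
    (hf : ∀ a b, F.Adj a b → (unionCopies H M T).Adj (f a) (f b)) {v : γ}
    (hv : v ∈ bigVerts F T) : ∃ a, f v = Sum.inl a := by
  rcases hfv : f v with a | ⟨i, u⟩
  · exact ⟨a, rfl⟩
  exfalso
  have key : ∀ x ∈ (F.connectedComponentMk v).supp, ∃ w, f x = Sum.inr (i, w) := fun x hx =>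
    mem_of_mem_component (P := {x | ∃ w, f x = Sum.inr (i, w)}) (fun a b _ hab ha => by
      obtain ⟨w, hw⟩ := ha
      have h := hf a b hab
      rcases hb : f b with b' | ⟨j, b'⟩
      · simp [hw, hb] at h
      · simp only [hw, hb, unionCopies_adj_inr_inr] at h
        exact ⟨b', by rw [hb, h.1]⟩) ConnectedComponent.connectedComponentMk_mem hx ⟨u, hfv⟩
  choose! g hg using key
  refine hv ((contains_induce_iff _ _ _).2 ⟨g, ?_, ?_⟩)
  · intro a ha b hb hab
    apply f.injective
    rw [hg a ha, hg b hb, hab]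
  · intro a ha b hb hab
    have h := hf a b hab
    rw [hg a ha, hg b hb, unionCopies_adj_inr_inr] at h
    exact h.2

/-- To embed `F` into a graph with many copies of `T`, it suffices to embed the components not
contained in `T`, leaving enough copies of `T` untouched. -/
lemma contains_of_isEmbOn_bigVerts [Fintype γ] [Nonempty β] {F : SimpleGraph γ}
    {T : SimpleGraph β} {M : ℕ} {G : SimpleGraph (α ⊕ Fin M × β)}
    (hG : ∀ i a b, T.Adj a b → G.Adj (Sum.inr (i, a)) (Sum.inr (i, b)))
    {φ : γ → α ⊕ Fin M × β} (hφ : IsEmbOn F (bigVerts F T) G φ) (S : Finset (Fin M))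
    (hS : ∀ x ∈ bigVerts F T, ∀ i a, φ x = Sum.inr (i, a) → i ∈ S)
    (hM : S.card + Fintype.card γ ≤ M) : Contains G F := by
  classical
  have hcard : Fintype.card γ ≤ Fintype.card {i // i ∈ Sᶜ} := by
    rw [Fintype.card_coe, Finset.card_compl, Fintype.card_fin]
    omega
  obtain ⟨idx⟩ := Function.Embedding.nonempty_of_card_le hcard
  have he : ∀ c : F.ConnectedComponent, ∃ e : γ → β,
      Contains T (SimpleGraph.induce c.supp F) → IsEmbOn F c.supp T e := fun c => by
    by_cases h : Contains T (SimpleGraph.induce c.supp F)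
    · obtain ⟨e, he⟩ := (contains_induce_iff _ _ _).1 h
      exact ⟨e, fun _ => he⟩
    · exact ⟨fun _ => Classical.arbitrary β, fun h' => (h h').elim⟩
  choose e he using he
  let mk := F.connectedComponentMk
  let ψ : γ → α ⊕ Fin M × β := fun x =>
    if x ∈ bigVerts F T then φ x else Sum.inr ((idx (mk x).out : Fin M), e (mk x) x)
  have hsmall : ∀ x, x ∉ bigVerts F T →
      ψ x = Sum.inr ((idx (mk x).out : Fin M), e (mk x) x) := fun x hx => if_neg hx
  have hbig : ∀ x, x ∈ bigVerts F T → ψ x = φ x := fun x hx => if_pos hx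
  have hmix : ∀ x y, x ∈ bigVerts F T → y ∉ bigVerts F T → ψ x ≠ ψ y := fun x y hx hy h => by
    rw [hbig x hx, hsmall y hy] at h
    have := hS x hx _ _ h
    exact Finset.mem_compl.1 (idx (mk y).out).2 this
  have hesm : ∀ x, x ∉ bigVerts F T → IsEmbOn F (mk x).supp T (e (mk x)) := fun x hx =>
    he _ (not_not.1 hx)
  refine ⟨⟨ψ, fun x y h => ?_⟩, fun x y hxy => ?_⟩
  · by_cases hx : x ∈ bigVerts F T <;> by_cases hy : y ∈ bigVerts F T
    · rw [hbig x hx, hbig y hy] at h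
      exact hφ.1 hx hy h
    · exact (hmix x y hx hy h).elim
    · exact (hmix y x hy hx h.symm).elim
    · rw [hsmall x hx, hsmall y hy] at h
      simp only [Sum.inr.injEq, Prod.mk.injEq] at h
      have h1 := idx.injective (Subtype.ext h.1)
      have h2 : mk x = mk y := by
        rw [← Quot.out_eq (mk x), ← Quot.out_eq (mk y)]
        exact congrArg _ h1
      have h3 := h.2
      rw [← h2] at h3
      exact (hesm x hx).1 ConnectedComponent.connectedComponentMk_mem
        (ConnectedComponent.mem_supp_iff _ _ |>.2 h2.symm) h3
  · change G.Adj (ψ x) (ψ y)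
    by_cases hx : x ∈ bigVerts F T
    · have hy := mem_bigVerts_of_adj hxy hx
      rw [hbig x hx, hbig y hy]
      exact hφ.2 x hx y hy hxy
    · have hy : y ∉ bigVerts F T := fun hy => hx (mem_bigVerts_of_adj hxy.symm hy)
      have h2 : mk x = mk y := ConnectedComponent.connectedComponentMk_eq_of_adj hxy
      rw [hsmall x hx, hsmall y hy, ← h2]
      exact hG _ _ _ ((hesm x hx).2 x ConnectedComponent.connectedComponentMk_mem y
        (ConnectedComponent.mem_supp_iff _ _ |>.2 h2.symm) hxy)

end Basic

section Saturation

variable {α β γ V W : Type*}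

lemma SatSingle.of_local_embeddings [Fintype γ] {F : SimpleGraph γ} {G : SimpleGraph V}
    {G' : SimpleGraph W} (hG : SatSingle F G)
    (h : ∀ J : Finset W, J.card ≤ Fintype.card γ + 2 → ∃ Φ : G ↪g G', ∀ x ∈ J, ∃ y, Φ y = x) :
    SatSingle F G' := by
  classical
  constructor
  · rintro ⟨f, hf⟩
    obtain ⟨Φ, hΦ⟩ := h (Finset.univ.image f)
      (Finset.card_image_le.trans (Finset.card_univ.le.trans (Nat.le_add_right _ _)))
    choose g hg using fun x => hΦ (f x) (Finset.mem_image_of_mem f (Finset.mem_univ x))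
    refine hG.1 ⟨⟨g, fun x y hxy => f.injective ?_⟩, fun a b hab => ?_⟩
    · rw [← hg x, ← hg y, hxy]
    · have := hf a b hab
      rw [← hg a, ← hg b] at this
      exact Φ.map_adj_iff.1 this
  · intro u v huv hadj
    obtain ⟨Φ, hΦ⟩ := h {u, v} (Finset.card_le_two.trans (Nat.le_add_left _ _))
    obtain ⟨a, rfl⟩ := hΦ u (by simp)
    obtain ⟨b, rfl⟩ := hΦ v (by simp)
    obtain ⟨f, hf⟩ := hG.2 a b (fun hab => huv (hab ▸ rfl)) (fun hab => hadj (Φ.map_adj_iff.2 hab))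
    refine ⟨f.trans Φ.toEmbedding, fun x y hxy => ?_⟩
    have := hf x y hxy
    simp only [sup_adj, fromEdgeSet_adj, Set.mem_singleton_iff, Sym2.eq_iff] at this
    simp only [Function.Embedding.trans_apply, RelEmbedding.coe_toEmbedding, sup_adj,
      fromEdgeSet_adj, Set.mem_singleton_iff, Sym2.eq_iff, ne_eq, Φ.map_adj_iff, Φ.injective.eq_iff]
    exact this

lemma exists_satSingle_ge [Finite V] {F : SimpleGraph γ} {G₀ : SimpleGraph V}
    (h : ¬ Contains G₀ F) : ∃ G, G₀ ≤ G ∧ SatSingle F G := by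
  obtain ⟨G, hle, hG⟩ := (Set.toFinite {G : SimpleGraph V | ¬ Contains G F}).exists_le_maximal h
  refine ⟨G, hle, hG.1, fun u v huv hadj => ?_⟩
  by_contra hc
  refine hadj (hG.2 hc le_sup_left ?_)
  simp [huv]

lemma exists_embedding_finset_subset_range {ι κ : Type*} [Fintype ι] [Fintype κ] (J : Finset κ)
    (hJ : J.card ≤ Fintype.card ι) (hι : Fintype.card ι ≤ Fintype.card κ) :
    ∃ r : ι ↪ κ, ∀ j ∈ J, ∃ i, r i = j := by
  obtain ⟨J', hJJ', hcard⟩ := Finset.exists_superset_card_eq hJ hι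
  let e : ι ≃ J' := Fintype.equivOfCardEq (by rw [Fintype.card_coe, hcard])
  exact ⟨e.toEmbedding.trans (Function.Embedding.subtype _),
    fun j hj => ⟨e.symm ⟨j, hJJ' hj⟩, by simp⟩⟩

/-- A saturated graph on a core together with copies of `T`, most of which are untouched by the
core, yields an `F`-saturated blueprint. -/
lemma exists_saturated_blueprint_of_untouched [Fintype α] [Fintype β] [Fintype γ]
    {F : SimpleGraph γ} {T : SimpleGraph β} {M : ℕ} {G : SimpleGraph (α ⊕ Fin M × β)}
    (hG : SatSingle F G)
    (hcopies : ∀ x y, G.Adj (Sum.inr x) (Sum.inr y) ↔ x.1 = y.1 ∧ T.Adj x.2 y.2)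
    (S : Finset (Fin M)) (hS : ∀ v i u, G.Adj (Sum.inl v) (Sum.inr (i, u)) → i ∈ S)
    (hcard : S.card + Fintype.card γ + 2 ≤ M) :
    ∃ (nH : ℕ) (H : SimpleGraph (Fin nH)),
      nH % Fintype.card β = Fintype.card α % Fintype.card β ∧
      ∃ K : ℕ, ∀ k : ℕ, K ≤ k → SatSingle F (unionCopies H k T) := by
  classical
  let ι : α ⊕ S × β → α ⊕ Fin M × β := Sum.map id (Prod.map (↑) id)
  let e := Fintype.equivFin (α ⊕ S × β)
  refine ⟨Fintype.card (α ⊕ S × β), (G.comap ι).comap e.symm, ?_, M, fun k hk => ?_⟩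
  · simp [Fintype.card_sum, Fintype.card_prod]
  refine hG.of_local_embeddings fun J hJ => ?_
  let J' : Finset (Fin k) := J.biUnion fun x => Sum.elim (fun _ => ∅) (fun y => {y.1}) x
  have hJ' : J'.card ≤ J.card := by
    refine (Finset.card_biUnion_le_card_mul _ _ 1 ?_).trans (mul_one _).le
    rintro (x | x) _ <;> simp
  have hR : Fintype.card {i // i ∉ S} = M - S.card := by
    rw [Fintype.card_subtype_compl, Fintype.card_fin, Fintype.card_coe]
  obtain ⟨r, hr⟩ := exists_embedding_finset_subset_range (ι := {i // i ∉ S}) J'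
    (by omega) (by rw [Fintype.card_fin]; omega)
  let Φ : α ⊕ Fin M × β → Fin (Fintype.card (α ⊕ S × β)) ⊕ Fin k × β := fun x =>
    match x with
    | Sum.inl v => Sum.inl (e (Sum.inl v))
    | Sum.inr (i, u) =>
      if h : i ∈ S then Sum.inl (e (Sum.inr (⟨i, h⟩, u))) else Sum.inr (r ⟨i, h⟩, u)
  have hΦl : ∀ v, Φ (Sum.inl v) = Sum.inl (e (Sum.inl v)) := fun v => rfl
  have hΦS : ∀ i u (h : i ∈ S), Φ (Sum.inr (i, u)) = Sum.inl (e (Sum.inr (⟨i, h⟩, u))) :=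
    fun i u h => dif_pos h
  have hΦR : ∀ i u (h : i ∉ S), Φ (Sum.inr (i, u)) = Sum.inr (r ⟨i, h⟩, u) :=
    fun i u h => dif_neg h
  have hinj : Function.Injective Φ := by
    rintro (v | ⟨i, u⟩) (w | ⟨j, u'⟩) h
    · simpa [hΦl] using h
    · by_cases hj : j ∈ S
      · simp [hΦl, hΦS j u' hj] at h
      · simp [hΦl, hΦR j u' hj] at h
    · by_cases hi : i ∈ S
      · simp [hΦl, hΦS i u hi] at h
      · simp [hΦl, hΦR i u hi] at h
    · by_cases hi : i ∈ S <;> by_cases hj : j ∈ S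
      · simpa [hΦS i u hi, hΦS j u' hj] using h
      · simp [hΦS i u hi, hΦR j u' hj] at h
      · simp [hΦR i u hi, hΦS j u' hj] at h
      · simpa [hΦR i u hi, hΦR j u' hj] using h
  have hnot : ∀ v i u, i ∉ S → ¬ G.Adj (Sum.inl v) (Sum.inr (i, u)) :=
    fun v i u hi h => hi (hS v i u h)
  have hadj : ∀ x y, (unionCopies ((G.comap ι).comap e.symm) k T).Adj (Φ x) (Φ y) ↔
      G.Adj x y := by
    rintro (v | ⟨i, u⟩) (w | ⟨j, u'⟩)
    · simp [hΦl, ι]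
    · by_cases hj : j ∈ S
      · simp [hΦl, hΦS j u' hj, ι]
      · simp [hΦl, hΦR j u' hj, hnot v j u' hj]
    · rw [G.adj_comm]
      by_cases hi : i ∈ S
      · simp [hΦl, hΦS i u hi, ι, G.adj_comm]
      · simp [hΦl, hΦR i u hi, hnot w i u hi]
    · by_cases hi : i ∈ S <;> by_cases hj : j ∈ S
      · simp [hΦS i u hi, hΦS j u' hj, ι]
      · have : i ≠ j := fun h => hj (h ▸ hi)
        simp [hΦS i u hi, hΦR j u' hj, hcopies, this]
      · have : i ≠ j := fun h => hi (h ▸ hj)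
        simp [hΦR i u hi, hΦS j u' hj, hcopies, this]
      · simp [hΦR i u hi, hΦR j u' hj, hcopies]
  refine ⟨⟨⟨Φ, hinj⟩, fun {x y} => hadj x y⟩, ?_⟩
  rintro (x | ⟨i, u⟩) hx
  · obtain ⟨y, rfl⟩ := e.surjective x
    rcases y with v | ⟨⟨i, hi⟩, u⟩
    · exact ⟨Sum.inl v, hΦl v⟩
    · exact ⟨Sum.inr (i, u), hΦS i u hi⟩
  · obtain ⟨⟨j, hj⟩, rfl⟩ := hr i (Finset.mem_biUnion.2 ⟨_, hx, by simp⟩)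
    exact ⟨Sum.inr (j, u), hΦR j u hj⟩

/-- A core `H₀` for which any additional edges between copies of `T`, or too many additional edges
from one vertex of the core to the same vertex in different copies, create `F`, extends to an
`F`-saturated blueprint. -/
lemma exists_saturated_blueprint_of_core [Fintype α] [Fintype β] [Fintype γ]
    {F : SimpleGraph γ} {T : SimpleGraph β} {H₀ : SimpleGraph α} (M₀ N : ℕ)
    (hfree : ∀ M, ¬ Contains (unionCopies H₀ M T) F)
    (hcopies : ∀ M, M₀ ≤ M → ∀ G, unionCopies H₀ M T ≤ G → ∀ x y,
      G.Adj (Sum.inr x) (Sum.inr y) → ¬ (x.1 = y.1 ∧ T.Adj x.2 y.2) → Contains G F)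
    (hcross : ∀ M, M₀ ≤ M → ∀ G, unionCopies H₀ M T ≤ G → ∀ v u, ∀ S : Finset (Fin M),
      N ≤ S.card → (∀ i ∈ S, G.Adj (Sum.inl v) (Sum.inr (i, u))) → Contains G F) :
    ∃ (nH : ℕ) (H : SimpleGraph (Fin nH)),
      nH % Fintype.card β = Fintype.card α % Fintype.card β ∧
      ∃ K : ℕ, ∀ k : ℕ, K ≤ k → SatSingle F (unionCopies H k T) := by
  classical
  obtain ⟨M, hM⟩ : ∃ M, M = M₀ + Fintype.card (α × β) * N + Fintype.card γ + 2 := ⟨_, rfl⟩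
  obtain ⟨G, hle, hG⟩ := exists_satSingle_ge (hfree M)
  have hM₀ : M₀ ≤ M := by omega
  let S : Finset (Fin M) := (Finset.univ : Finset (α × β)).biUnion fun p =>
    Finset.univ.filter fun i => G.Adj (Sum.inl p.1) (Sum.inr (i, p.2))
  have hScard : S.card ≤ Fintype.card (α × β) * N := by
    refine Finset.card_biUnion_le_card_mul _ _ _ fun p _ => ?_
    by_contra! hp
    exact hG.1 (hcross M hM₀ G hle p.1 p.2 _ hp.le fun i hi => (Finset.mem_filter.1 hi).2)
  refine exists_saturated_blueprint_of_untouched hG (fun x y => ⟨fun h => ?_, fun h => ?_⟩) S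
    (fun v i u h => Finset.mem_biUnion.2 ⟨(v, u), Finset.mem_univ _, by simpa using h⟩) (by omega)
  · by_contra hxy
    exact hG.1 (hcopies M hM₀ G hle x y h hxy)
  · exact hle ((unionCopies_adj_inr_inr _ _ _ _ _).2 h)

end Saturation

section Placement

variable {α β γ : Type*}

/-- Embed the part `D` of `F` into the copies of `T` via `g`, and the rest of the components not
contained in `T` into the core via `ψ`. -/
lemma contains_of_core_of_copies [Fintype γ] [Nonempty β] {F : SimpleGraph γ}
    {T : SimpleGraph β} {H₀ : SimpleGraph α} {M : ℕ} {G : SimpleGraph (α ⊕ Fin M × β)}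
    (hG : unionCopies H₀ M T ≤ G) (D : Set γ) {g : γ → Fin M × β} {ψ : γ → α}
    (hgD : Set.InjOn g D)
    (hgadj : ∀ a ∈ D, ∀ b ∈ D, F.Adj a b → G.Adj (Sum.inr (g a)) (Sum.inr (g b)))
    (hψ : IsEmbOn F (bigVerts F T \ D) H₀ ψ)
    (hcross : ∀ a ∈ D, ∀ b ∈ bigVerts F T \ D, F.Adj a b → G.Adj (Sum.inl (ψ b)) (Sum.inr (g a)))
    (S : Finset (Fin M)) (hS : ∀ a ∈ D, (g a).1 ∈ S) (hM : S.card + Fintype.card γ ≤ M) :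
    Contains G F := by
  classical
  refine contains_of_isEmbOn_bigVerts
    (φ := fun x => if x ∈ D then Sum.inr (g x) else Sum.inl (ψ x))
    (fun i a b hab => hG (by simpa using hab)) ⟨?_, ?_⟩ S ?_ hM
  · intro a ha b hb hab
    by_cases haD : a ∈ D <;> by_cases hbD : b ∈ D <;> simp only [haD, hbD, if_true, if_false] at hab
    · exact hgD haD hbD (Sum.inr_injective hab)
    · simp at hab
    · simp at hab
    · exact hψ.1 ⟨ha, haD⟩ ⟨hb, hbD⟩ (Sum.inl_injective hab)
  · intro a ha b hb hab
    by_cases haD : a ∈ D <;> by_cases hbD : b ∈ D <;> simp only [haD, hbD, if_true, if_false]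
    · exact hgadj a haD b hbD hab
    · exact (hcross a haD b ⟨hb, hbD⟩ hab).symm
    · exact hcross b hbD a ⟨ha, haD⟩ hab.symm
    · exact hG (by simpa using hψ.2 a ⟨ha, haD⟩ b ⟨hb, hbD⟩ hab)
  · intro x _ i a hx
    by_cases hxD : x ∈ D <;> simp only [hxD, if_true, if_false] at hx
    · have := hS x hxD
      rw [Sum.inr_injective hx] at this
      exact this
    · simp at hx

/-- The component `c` of `F`, which is not contained in `T`, splits into two parts that both embed
into `T` via `h`, joined by the single edge `ab`, where `a` and `b` are sent to `u` and `v`. -/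
structure IsSplit (F : SimpleGraph γ) (T : SimpleGraph β) (c : F.ConnectedComponent)
    (u v : β) (h : γ → β) (c₁ c₂ : Set γ) (a b : γ) : Prop where
  not_contains : ¬ Contains T (SimpleGraph.induce c.supp F)
  union : c₁ ∪ c₂ = c.supp
  disjoint : Disjoint c₁ c₂
  mem_left : a ∈ c₁
  mem_right : b ∈ c₂
  map_left : h a = u
  map_right : h b = v
  adj : F.Adj a b
  emb_left : IsEmbOn F c₁ T h
  emb_right : IsEmbOn F c₂ T h
  eq_of_adj : ∀ x ∈ c₁, ∀ y ∈ c₂, F.Adj x y → x = a ∧ y = b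

lemma IsSplit.symm {F : SimpleGraph γ} {T : SimpleGraph β} {c : F.ConnectedComponent}
    {u v : β} {h : γ → β} {c₁ c₂ : Set γ} {a b : γ} (hs : IsSplit F T c u v h c₁ c₂ a b) :
    IsSplit F T c v u h c₂ c₁ b a where
  not_contains := hs.not_contains
  union := by rw [Set.union_comm, hs.union]
  disjoint := hs.disjoint.symm
  mem_left := hs.mem_right
  mem_right := hs.mem_left
  map_left := hs.map_right
  map_right := hs.map_left
  adj := hs.adj.symm
  emb_left := hs.emb_right
  emb_right := hs.emb_left
  eq_of_adj x hx y hy hxy := (hs.eq_of_adj y hy x hx hxy.symm).symm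

lemma exists_isSplit [Nonempty β] {F : SimpleGraph γ} {T : SimpleGraph β}
    {c : F.ConnectedComponent} {u v : β} (hc : ¬ Contains T (SimpleGraph.induce c.supp F))
    (h : Contains (disjUnionG T T ⊔ SimpleGraph.fromEdgeSet {s(Sum.inl u, Sum.inr v)})
      (SimpleGraph.induce c.supp F)) :
    ∃ h c₁ c₂ a b, IsSplit F T c u v h c₁ c₂ a b := by
  obtain ⟨f, hinj, hadj⟩ := (contains_induce_iff _ _ _).1 h
  have hll : ∀ x ∈ c.supp, ∀ y ∈ c.supp, ∀ w w', f x = Sum.inl w → f y = Sum.inl w' →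
      F.Adj x y → T.Adj w w' := fun x hx y hy w w' hw hw' hxy => by
    have := hadj x hx y hy hxy
    rw [hw, hw'] at this
    simp only [disjUnionG, sup_adj, fromRel_adj, fromEdgeSet_adj] at this
    simp only [Set.mem_singleton_iff, Sym2.eq_iff, reduceCtorEq, and_false, false_and, or_false]
      at this
    exact this.2.elim id fun h' => h'.symm
  have hrr : ∀ x ∈ c.supp, ∀ y ∈ c.supp, ∀ w w', f x = Sum.inr w → f y = Sum.inr w' →
      F.Adj x y → T.Adj w w' := fun x hx y hy w w' hw hw' hxy => by
    have := hadj x hx y hy hxy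
    rw [hw, hw'] at this
    simp only [disjUnionG, sup_adj, fromRel_adj, fromEdgeSet_adj] at this
    simp only [Set.mem_singleton_iff, Sym2.eq_iff, reduceCtorEq, and_false, false_and, or_false]
      at this
    exact this.2.elim id fun h' => h'.symm
  have hlr : ∀ x ∈ c.supp, ∀ y ∈ c.supp, ∀ w w', f x = Sum.inl w → f y = Sum.inr w' →
      F.Adj x y → w = u ∧ w' = v := fun x hx y hy w w' hw hw' hxy => by
    have := hadj x hx y hy hxy
    rw [hw, hw'] at this
    simpa [disjUnionG] using this
  let g : γ → β := fun x => Sum.elim id id (f x)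
  let c₁ : Set γ := {x | x ∈ c.supp ∧ ∃ w, f x = Sum.inl w}
  let c₂ : Set γ := {x | x ∈ c.supp ∧ ∃ w, f x = Sum.inr w}
  have hemb₁ : IsEmbOn F c₁ T g := by
    refine ⟨?_, ?_⟩
    · rintro x ⟨hx, w, hw⟩ y ⟨hy, w', hw'⟩ hxy
      refine hinj hx hy ?_
      simp only [g, hw, hw', Sum.elim_inl, id] at hxy
      rw [hw, hw', hxy]
    · rintro x ⟨hx, w, hw⟩ y ⟨hy, w', hw'⟩ hxy
      simpa [g, hw, hw'] using hll x hx y hy w w' hw hw' hxy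
  have hemb₂ : IsEmbOn F c₂ T g := by
    refine ⟨?_, ?_⟩
    · rintro x ⟨hx, w, hw⟩ y ⟨hy, w', hw'⟩ hxy
      refine hinj hx hy ?_
      simp only [g, hw, hw', Sum.elim_inr, id] at hxy
      rw [hw, hw', hxy]
    · rintro x ⟨hx, w, hw⟩ y ⟨hy, w', hw'⟩ hxy
      simpa [g, hw, hw'] using hrr x hx y hy w w' hw hw' hxy
  have hunion : c₁ ∪ c₂ = c.supp := by
    ext x
    constructor
    · rintro (hx | hx) <;> exact hx.1
    · intro hx
      rcases hfx : f x with w | w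
      · exact Or.inl ⟨hx, w, hfx⟩
      · exact Or.inr ⟨hx, w, hfx⟩
  have hdisj : Disjoint c₁ c₂ := by
    rw [Set.disjoint_left]
    rintro x ⟨_, w, hw⟩ ⟨_, w', hw'⟩
    rw [hw] at hw'
    cases hw'
  obtain ⟨a, ha, b, hb, hab⟩ : ∃ a ∈ c₁, ∃ b ∈ c₂, F.Adj a b := by
    by_contra! hno
    obtain ⟨x, hx⟩ := c.nonempty_supp
    have hmem : ∀ {y z}, y ∈ c.supp → F.Adj y z → z ∈ c.supp := fun hy hyz =>
      (ConnectedComponent.mem_supp_congr_adj _ hyz).1 hy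
    rcases hunion.symm ▸ hx with hx' | hx'
    · refine hc ((contains_induce_iff _ _ _).2 ⟨g, hemb₁.mono fun y hy => ?_⟩)
      refine mem_of_mem_component (P := c₁) (fun y z hy' hyz hy₁ => ?_) hx hy hx'
      exact (hunion.symm ▸ hmem hy' hyz : z ∈ c₁ ∪ c₂).resolve_right
        fun hz => hno y hy₁ z hz hyz
    · refine hc ((contains_induce_iff _ _ _).2 ⟨g, hemb₂.mono fun y hy => ?_⟩)
      refine mem_of_mem_component (P := c₂) (fun y z hy' hyz hy₂ => ?_) hx hy hx'
      exact (hunion.symm ▸ hmem hy' hyz : z ∈ c₁ ∪ c₂).resolve_left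
        fun hz => hno z hz y hy₂ hyz.symm
  have hfab : ∀ x ∈ c₁, ∀ y ∈ c₂, F.Adj x y → f x = Sum.inl u ∧ f y = Sum.inr v := by
    rintro x ⟨hx, w, hw⟩ y ⟨hy, w', hw'⟩ hxy
    obtain ⟨rfl, rfl⟩ := hlr x hx y hy w w' hw hw' hxy
    exact ⟨hw, hw'⟩
  have hfa := hfab a ha b hb hab
  refine ⟨g, c₁, c₂, a, b, hc, hunion, hdisj, ha, hb, by simp [g, hfa.1], by simp [g, hfa.2], hab,
    hemb₁, hemb₂, fun x hx y hy hxy => ?_⟩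
  have hfx := hfab x hx y hy hxy
  exact ⟨hinj hx.1 ha.1 (by rw [hfx.1, hfa.1]), hinj hy.1 hb.1 (by rw [hfx.2, hfa.2])⟩

/-- If all but any one of the components not contained in `T` embed into the core, then an
additional edge between the copies of `T` creates `F`. -/
lemma contains_of_adj_copies {nF t : ℕ} {F : SimpleGraph (Fin nF)} {T : SimpleGraph (Fin t)}
    (hT : GoodTree F t T) {H₀ : SimpleGraph α}
    (hH₀ : ∀ c : F.ConnectedComponent, ¬ Contains T (SimpleGraph.induce c.supp F) →
      ∃ ψ, IsEmbOn F (bigVerts F T \ c.supp) H₀ ψ)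
    {M : ℕ} (hM : nF + 2 ≤ M) {G : SimpleGraph (α ⊕ Fin M × Fin t)}
    (hG : unionCopies H₀ M T ≤ G) {x y : Fin M × Fin t} (hxy : G.Adj (Sum.inr x) (Sum.inr y))
    (hne : ¬ (x.1 = y.1 ∧ T.Adj x.2 y.2)) : Contains G F := by
  classical
  obtain ⟨hTree, hone, htwo⟩ := hT
  have : Nonempty (Fin t) := ⟨x.2⟩
  obtain ⟨i, u⟩ := x
  obtain ⟨j, v⟩ := y
  have hcopy : ∀ k a b, T.Adj a b → G.Adj (Sum.inr (k, a)) (Sum.inr (k, b)) :=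
    fun k a b hab => hG (by simpa using hab)
  have hclosed : ∀ c : F.ConnectedComponent, ∀ a ∈ c.supp, ∀ b ∈ bigVerts F T \ c.supp,
      ¬ F.Adj a b := fun c a ha b hb hab =>
    hb.2 ((ConnectedComponent.mem_supp_congr_adj _ hab).1 ha)
  by_cases hij : i = j
  · subst hij
    have huv : u ≠ v := by
      rintro rfl
      exact G.loopless.irrefl _ hxy
    obtain ⟨c, hc, hcT⟩ := hone u v huv fun h => hne ⟨rfl, h⟩
    obtain ⟨h, hinj, hadj⟩ := (contains_induce_iff _ _ _).1 hcT
    obtain ⟨ψ, hψ⟩ := hH₀ c hc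
    refine contains_of_core_of_copies hG c.supp (g := fun x => (i, h x)) ?_ ?_ hψ
      (fun a ha b hb hab => (hclosed c a ha b hb hab).elim) {i} (by simp) ?_
    · intro a ha b hb hab
      exact hinj ha hb (Prod.mk.inj hab).2
    · intro a ha b hb hab
      have := hadj a ha b hb hab
      simp only [sup_adj, fromEdgeSet_adj, Set.mem_singleton_iff, Sym2.eq_iff] at this
      rcases this with h1 | ⟨⟨h1, h2⟩ | ⟨h1, h2⟩, _⟩
      · exact hcopy _ _ _ h1
      · rw [h1, h2]
        exact hxy
      · rw [h1, h2]
        exact hxy.symm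
    · rw [Finset.card_singleton, Fintype.card_fin]
      omega
  · obtain ⟨c, hc, hcT⟩ := htwo u v
    obtain ⟨h, c₁, c₂, a, b, hs⟩ := exists_isSplit hc hcT
    obtain ⟨ψ, hψ⟩ := hH₀ c hc
    have hmem : ∀ x ∈ c.supp, x ∉ c₁ → x ∈ c₂ := fun x hx hx₁ =>
      (hs.union.symm ▸ hx : x ∈ c₁ ∪ c₂).resolve_left hx₁
    refine contains_of_core_of_copies hG c.supp (g := fun x => (if x ∈ c₁ then i else j, h x))
      ?_ ?_ hψ (fun a ha b hb hab => (hclosed c a ha b hb hab).elim) {i, j} ?_ ?_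
    · intro x hx y hy hxy'
      obtain ⟨h1, h2⟩ := Prod.mk.inj hxy'
      by_cases hx₁ : x ∈ c₁ <;> by_cases hy₁ : y ∈ c₁ <;>
        simp only [hx₁, hy₁, if_true, if_false] at h1
      · exact hs.emb_left.1 hx₁ hy₁ h2
      · exact (hij h1).elim
      · exact (hij h1.symm).elim
      · exact hs.emb_right.1 (hmem x hx hx₁) (hmem y hy hy₁) h2
    · intro x hx y hy hxy'
      by_cases hx₁ : x ∈ c₁ <;> by_cases hy₁ : y ∈ c₁ <;> simp only [hx₁, hy₁, if_true, if_false]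
      · exact hcopy _ _ _ (hs.emb_left.2 x hx₁ y hy₁ hxy')
      · obtain ⟨rfl, rfl⟩ := hs.eq_of_adj x hx₁ y (hmem y hy hy₁) hxy'
        rw [hs.map_left, hs.map_right]
        exact hxy
      · obtain ⟨rfl, rfl⟩ := hs.eq_of_adj y hy₁ x (hmem x hx hx₁) hxy'.symm
        rw [hs.map_left, hs.map_right]
        exact hxy.symm
      · exact hcopy _ _ _ (hs.emb_right.2 x (hmem x hx hx₁) y (hmem y hy hy₁) hxy')
    · intro x _
      simp only [Finset.mem_insert, Finset.mem_singleton]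
      split_ifs <;> simp
    · rw [Fintype.card_fin]
      have := Finset.card_le_two (a := i) (b := j)
      omega

/-- An injection into `Fin p ⊕ Fin m` with prescribed summands, avoiding `v`. -/
lemma exists_injective_sum_avoiding [Fintype γ] {p m : ℕ} (Z : Finset γ) (v : Fin p ⊕ Fin m)
    (hm : Fintype.card γ + 1 ≤ m) (hp : Z.card ≤ p) (hv : v.isLeft → Z.card + 1 ≤ p) :
    ∃ ψ : γ → Fin p ⊕ Fin m, Function.Injective ψ ∧ (∀ x, ψ x ≠ v) ∧
      ∀ x, (ψ x).isLeft ↔ x ∈ Z := by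
  classical
  obtain ⟨e₁, he₁⟩ : ∃ e : Z ↪ Fin p, ∀ x, Sum.inl (e x) ≠ v := by
    let A : Finset (Fin p) := Finset.univ.filter fun k => Sum.inl k ≠ v
    have hA : Z.card ≤ A.card := by
      rcases v with k | k
      · have : A = Finset.univ.erase k := by
          ext x
          simp [A]
        rw [this, Finset.card_erase_of_mem (Finset.mem_univ _), Finset.card_univ, Fintype.card_fin]
        have := hv rfl
        omega
      · simpa [A] using hp
    obtain ⟨e⟩ := Function.Embedding.nonempty_of_card_le (α := Z) (β := A) (by simpa using hA)
    exact ⟨e.trans (Function.Embedding.subtype _), fun x => (Finset.mem_filter.1 (e x).2).2⟩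
  obtain ⟨e₂, he₂⟩ : ∃ e : γ ↪ Fin m, ∀ x, Sum.inr (e x) ≠ v := by
    let B : Finset (Fin m) := Finset.univ.filter fun k => Sum.inr k ≠ v
    have hB : Fintype.card γ ≤ B.card := by
      rcases v with k | k
      · simp only [ne_eq, reduceCtorEq, not_false_eq_true, Finset.filter_true, Finset.card_univ,
          Fintype.card_fin, B]
        omega
      · have : B = Finset.univ.erase k := by
          ext x
          simp [B]
        rw [this, Finset.card_erase_of_mem (Finset.mem_univ _), Finset.card_univ, Fintype.card_fin]
        omega
    obtain ⟨e⟩ := Function.Embedding.nonempty_of_card_le (α := γ) (β := B) (by simpa using hB)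
    exact ⟨e.trans (Function.Embedding.subtype _), fun x => (Finset.mem_filter.1 (e x).2).2⟩
  refine ⟨fun x => if h : x ∈ Z then Sum.inl (e₁ ⟨x, h⟩) else Sum.inr (e₂ x), ?_, ?_, ?_⟩
  · intro x y hxy
    by_cases hx : x ∈ Z <;> by_cases hy : y ∈ Z <;>
      simp only [hx, hy, dif_pos, dif_neg, not_false_eq_true, reduceCtorEq] at hxy
    · exact congrArg Subtype.val (e₁.injective (Sum.inl_injective hxy))
    · exact e₂.injective (Sum.inr_injective hxy)
  · intro x
    by_cases hx : x ∈ Z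
    · simpa [hx] using he₁ ⟨x, hx⟩
    · simpa [hx] using he₂ x
  · intro x
    by_cases hx : x ∈ Z <;> simp [hx]

lemma exists_injective_sum_through [Fintype γ] {p m : ℕ} (Z : Finset γ) (v : Fin p ⊕ Fin m)
    (x₀ : γ) (hm : Fintype.card γ + 1 ≤ m) (hp : Z.card ≤ p) (hv : v.isLeft → Z.card + 1 ≤ p) :
    ∃ ψ : γ → Fin p ⊕ Fin m, Function.Injective ψ ∧ ψ x₀ = v ∧
      ∀ x, x ≠ x₀ → ((ψ x).isLeft ↔ x ∈ Z) := by
  classical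
  obtain ⟨ψ, hinj, hne, hmem⟩ := exists_injective_sum_avoiding Z v hm hp hv
  refine ⟨Function.update ψ x₀ v, fun x y hxy => ?_, by simp, fun x hx => ?_⟩
  · by_cases hx : x = x₀ <;> by_cases hy : y = x₀
    · rw [hx, hy]
    · simp only [hx, Function.update_self, ne_eq, hy, not_false_eq_true, Function.update_of_ne]
        at hxy
      exact (hne y hxy.symm).elim
    · simp only [hy, Function.update_self, ne_eq, hx, not_false_eq_true, Function.update_of_ne]
        at hxy
      exact (hne x hxy).elim
    · simp only [ne_eq, hx, hy, not_false_eq_true, Function.update_of_ne] at hxy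
      exact hinj hxy
  · rw [Function.update_of_ne hx]
    exact hmem x

end Placement

section Cores

variable {β γ : Type*}

/-- A clique on `Fin p` together with the isolated vertices `Fin m`. -/
def cliqueCore (p m : ℕ) : SimpleGraph (Fin p ⊕ Fin m) where
  Adj x y := x ≠ y ∧ x.isLeft ∧ y.isLeft
  symm := ⟨fun _ _ h => ⟨h.1.symm, h.2.2, h.2.1⟩⟩
  loopless := ⟨fun _ h => h.1 rfl⟩

/-- A clique on `Fin p` completely joined to the independent set `Fin m`. -/
def joinCore (p m : ℕ) : SimpleGraph (Fin p ⊕ Fin m) where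
  Adj x y := x ≠ y ∧ (x.isLeft ∨ y.isLeft)
  symm := ⟨fun _ _ h => ⟨h.1.symm, h.2.symm⟩⟩
  loopless := ⟨fun _ h => h.1 rfl⟩

lemma exists_ge_add_mod_eq (p n : ℕ) {t r : ℕ} (hr : r < t) :
    ∃ m, n ≤ m ∧ (p + m) % t = r := by
  have h : p + n ≤ t * (p + n) := Nat.le_mul_of_pos_left _ (by omega)
  refine ⟨t * (p + n) + r - p, by omega, ?_⟩
  rw [show p + (t * (p + n) + r - p) = t * (p + n) + r by omega, Nat.mul_add_mod,
    Nat.mod_eq_of_lt hr]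

/-- The number of vertices which an embedding sends to the first part of the core is at most the
size of that part. -/
lemma card_le_of_map_inl_inl {δ : Type*} {p m : ℕ} {f : γ ↪ (Fin p ⊕ Fin m) ⊕ δ} {s : Finset γ}
    (hs : ∀ x ∈ s, ∃ k, f x = Sum.inl (Sum.inl k)) : s.card ≤ p := by
  rcases s.eq_empty_or_nonempty with rfl | ⟨x₀, hx₀⟩
  · simp
  have : Nonempty (Fin p) := ⟨(hs x₀ hx₀).choose⟩
  choose! k hk using hs
  have := Finset.card_le_card_of_injOn (t := Finset.univ) k (fun _ _ => Finset.mem_univ _)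
    (fun x hx y hy hxy => f.injective (by rw [hk x hx, hk y hy, hxy]))
  simpa using this

lemma exists_saturated_blueprint_of_star {nF t : ℕ} {F : SimpleGraph (Fin nF)}
    {T : SimpleGraph (Fin t)} (hT : GoodTree F t T) {c : F.ConnectedComponent}
    (hc : ¬ Contains T (SimpleGraph.induce c.supp F)) {z : Fin nF} (hzc : z ∈ c.supp)
    (hz : ∀ a b, a ∈ c.supp → F.Adj a b → a = z ∨ b = z) {r : ℕ} (hr : r < t) :
    ∃ (nH : ℕ) (H : SimpleGraph (Fin nH)), nH % t = r ∧
      ∃ K : ℕ, ∀ k : ℕ, K ≤ k → SatSingle F (unionCopies H k T) := by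
  classical
  have : Nonempty (Fin t) := ⟨⟨r, hr⟩⟩
  let B : Finset (Fin nF) := Finset.univ.filter (· ∈ bigVerts F T)
  have hB : ∀ {x}, x ∈ B ↔ x ∈ bigVerts F T := by simp [B]
  have hcB : ∀ {x}, x ∈ c.supp → x ∈ bigVerts F T := mem_bigVerts_of_mem hc
  have hclosed : ∀ {a b}, a ∈ c.supp → F.Adj a b → b ∈ c.supp := fun ha hab =>
    (ConnectedComponent.mem_supp_congr_adj _ hab).1 ha
  have hBpos : 0 < B.card := Finset.card_pos.2 ⟨z, hB.2 (hcB hzc)⟩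
  obtain ⟨m, hm, hmod⟩ := exists_ge_add_mod_eq (B.card - 1) (nF + 1) hr
  have hm' : Fintype.card (Fin nF) + 1 ≤ m := by simpa using hm
  have hcard : (B.filter (· ∉ c.supp)).card + 1 ≤ B.card := by
    refine Finset.card_lt_card (Finset.filter_ssubset.2 ⟨z, hB.2 (hcB hzc), ?_⟩)
    simpa using hzc
  have hres := exists_saturated_blueprint_of_core (F := F) (T := T)
    (H₀ := cliqueCore (B.card - 1) m) (2 * nF + 2) (nF + 1) ?_ ?_ ?_
  · simpa [hmod] using hres
  · rintro M ⟨f, hf⟩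
    have := card_le_of_map_inl_inl (f := f) (s := B) fun x hx => ?_
    · omega
    obtain ⟨y, hxy⟩ := exists_adj_of_mem_bigVerts (hB.1 hx)
    obtain ⟨x', hx'⟩ := exists_inl_of_mem_bigVerts hf (hB.1 hx)
    obtain ⟨y', hy'⟩ := exists_inl_of_mem_bigVerts hf (mem_bigVerts_of_adj hxy (hB.1 hx))
    have hadj := hf x y hxy
    rw [hx', hy', unionCopies_adj_inl_inl] at hadj
    obtain ⟨k, rfl⟩ := Sum.isLeft_iff.1 hadj.2.1
    exact ⟨k, hx'⟩
  · intro M hM G hG x y hxy hne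
    refine contains_of_adj_copies hT (fun c' hc' => ?_) (by omega) hG hxy hne
    have hcard' : (B.filter (· ∉ c'.supp)).card + 1 ≤ B.card := by
      obtain ⟨w, hw⟩ := c'.nonempty_supp
      refine Finset.card_lt_card (Finset.filter_ssubset.2 ⟨w, ?_, ?_⟩)
      · exact hB.2 (mem_bigVerts_of_mem hc' hw)
      · simpa using hw
    obtain ⟨ψ, hinj, -, hψ⟩ := exists_injective_sum_avoiding (p := B.card - 1) (m := m)
      (B.filter (· ∉ c'.supp)) (Sum.inr ⟨0, by omega⟩) hm' (by omega) (by simp)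
    refine ⟨ψ, hinj.injOn, fun a ha b hb hab => ⟨fun h => hab.ne (hinj h), ?_, ?_⟩⟩
    · exact (hψ a).2 (Finset.mem_filter.2 ⟨hB.2 ha.1, ha.2⟩)
    · exact (hψ b).2 (Finset.mem_filter.2 ⟨hB.2 hb.1, hb.2⟩)
  · intro M hM G hG v u S hS hadj
    rcases v with v | v
    · obtain ⟨b, hzb⟩ := exists_adj_of_mem_bigVerts (hcB hzc)
      obtain ⟨i, hi⟩ := Finset.card_pos.1 (show 0 < S.card by omega)
      have hbc := hclosed hzc hzb
      have hcard' : ((B.erase b).erase z).card + 2 = B.card := by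
        have h1 := Finset.card_erase_add_one (hB.2 (hcB hbc))
        have h2 := Finset.card_erase_add_one
          (Finset.mem_erase.2 ⟨hzb.ne, hB.2 (hcB hzc)⟩ : z ∈ B.erase b)
        omega
      obtain ⟨ψ, hinj, hψz, hψ⟩ := exists_injective_sum_through (p := B.card - 1) (m := m)
        ((B.erase b).erase z) (Sum.inl v) z hm' (by omega) (fun _ => by omega)
      have hleft : ∀ x ∈ bigVerts F T \ {b}, (ψ x).isLeft := fun x hx => by
        by_cases hxz : x = z
        · rw [hxz, hψz]
          rfl
        · exact (hψ x hxz).2 (Finset.mem_erase.2 ⟨hxz, Finset.mem_erase.2 ⟨hx.2, hB.2 hx.1⟩⟩)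
      refine contains_of_core_of_copies hG {b} (g := fun _ => (i, u)) (by simp) ?_
        ⟨hinj.injOn, fun x hx y hy hxy =>
          ⟨fun h => hxy.ne (hinj h), hleft x hx, hleft y hy⟩⟩ ?_ {i} (by simp) ?_
      · rintro x rfl y rfl hxy
        exact (F.loopless.irrefl _ hxy).elim
      · rintro x rfl y hy hxy
        rw [((hz x y hbc hxy).resolve_left hzb.ne'), hψz]
        exact hadj i hi
      · rw [Finset.card_singleton, Fintype.card_fin]
        omega
    · obtain ⟨idx⟩ := Function.Embedding.nonempty_of_card_le (α := Fin nF) (β := S)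
        (by rw [Fintype.card_coe, Fintype.card_fin]; omega)
      obtain ⟨ψ, hinj, hψz, hψ⟩ := exists_injective_sum_through (p := B.card - 1) (m := m)
        (B.filter (· ∉ c.supp)) (Sum.inr v) z hm' (by omega) (by simp)
      have hD : ∀ x ∈ bigVerts F T \ (c.supp \ {z}), x ≠ z → x ∉ c.supp :=
        fun x hx hxz hxc => hx.2 ⟨hxc, hxz⟩
      have hleft : ∀ x ∈ bigVerts F T \ (c.supp \ {z}), x ≠ z → (ψ x).isLeft :=
        fun x hx hxz => (hψ x hxz).2 (Finset.mem_filter.2 ⟨hB.2 hx.1, hD x hx hxz⟩)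
      refine contains_of_core_of_copies hG (c.supp \ {z}) (g := fun x => (idx x, u)) ?_ ?_
        ⟨hinj.injOn, fun x hx y hy hxy => ⟨fun h => hxy.ne (hinj h), ?_, ?_⟩⟩ ?_
        (Finset.univ.image fun x => (idx x : Fin M)) (by simp) ?_
      · intro x _ y _ hxy
        exact idx.injective (Subtype.ext (Prod.mk.inj hxy).1)
      · intro x hx y hy hxy
        rcases hz x y hx.1 hxy with h | h
        · exact (hx.2 h).elim
        · exact (hy.2 h).elim
      · refine hleft x hx ?_
        rintro rfl
        exact hD y hy hxy.ne' (hclosed hzc hxy)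
      · refine hleft y hy ?_
        rintro rfl
        exact hD x hx hxy.ne (hclosed hzc hxy.symm)
      · intro x hx y hy hxy
        rw [(hz x y hx.1 hxy).resolve_left hx.2, hψz]
        exact hadj _ (idx x).2
      · have := Finset.card_image_le (s := Finset.univ) (f := fun x : Fin nF => (idx x : Fin M))
        rw [Finset.card_univ, Fintype.card_fin] at this
        rw [Fintype.card_fin]
        omega

/-- `Z` meets every edge of the components of `F` not contained in `T`. -/
def IsBigCover (F : SimpleGraph γ) (T : SimpleGraph β) (Z : Finset γ) : Prop :=
  ∀ a b, a ∈ bigVerts F T → F.Adj a b → a ∈ Z ∨ b ∈ Z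

/-- Embed `D` into one copy of `T` and send `x₀` to the vertex `v` of the core, where the edge from
`v` to the vertex `u` of that copy realises all edges leaving `D`. -/
lemma contains_of_joinCore [Fintype γ] [Nonempty β] {F : SimpleGraph γ} {T : SimpleGraph β}
    {p m M : ℕ} (hm : Fintype.card γ + 1 ≤ m) (hM : 1 + Fintype.card γ ≤ M)
    {G : SimpleGraph ((Fin p ⊕ Fin m) ⊕ Fin M × β)} (hG : unionCopies (joinCore p m) M T ≤ G)
    {v : Fin p ⊕ Fin m} {i : Fin M} {u : β} (hadj : G.Adj (Sum.inl v) (Sum.inr (i, u)))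
    (D : Set γ) {h : γ → β} (hD : IsEmbOn F D T h) (x₀ : γ)
    (hcross : ∀ d ∈ D, ∀ y ∈ bigVerts F T \ D, F.Adj d y → y = x₀ ∧ h d = u) (Z : Finset γ)
    (hcov : ∀ a ∈ bigVerts F T \ D, ∀ b ∈ bigVerts F T \ D, F.Adj a b → a ≠ x₀ → b ≠ x₀ →
      a ∈ Z ∨ b ∈ Z)
    (hp : Z.card ≤ p) (hv : v.isLeft → Z.card + 1 ≤ p)
    (hnb : v.isLeft ∨ ∀ b ∈ bigVerts F T \ D, F.Adj x₀ b → b ∈ Z) : Contains G F := by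
  obtain ⟨ψ, hinj, hψ₀, hψ⟩ := exists_injective_sum_through Z v x₀ hm hp hv
  have hx₀ : ∀ b ∈ bigVerts F T \ D, F.Adj x₀ b → (ψ x₀).isLeft ∨ (ψ b).isLeft :=
    fun b hb hab => hnb.imp (fun hv' => by rwa [hψ₀]) fun h' => (hψ b hab.ne').2 (h' b hb hab)
  refine contains_of_core_of_copies hG D (g := fun x => (i, h x)) ?_ ?_
    ⟨hinj.injOn, fun a ha b hb hab => ⟨fun h' => hab.ne (hinj h'), ?_⟩⟩ ?_ {i} (by simp)
    (by rwa [Finset.card_singleton])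
  · intro a ha b hb hab
    exact hD.1 ha hb (Prod.mk.inj hab).2
  · intro a ha b hb hab
    exact hG (by simpa using hD.2 a ha b hb hab)
  · by_cases hax : a = x₀
    · subst hax
      exact hx₀ b hb hab
    by_cases hbx : b = x₀
    · subst hbx
      exact (hx₀ a ha hab.symm).symm
    exact (hcov a ha b hb hab hax hbx).imp (hψ a hax).2 (hψ b hbx).2
  · intro d hd y hy hdy
    obtain ⟨rfl, hu⟩ := hcross d hd y hy hdy
    rw [hψ₀, hu]
    exact hadj

namespace IsSplit

variable {F : SimpleGraph γ} {T : SimpleGraph β} {c : F.ConnectedComponent} {u v : β} {h : γ → β}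
  {c₁ c₂ : Set γ} {a b : γ}

lemma mem_bigVerts (hs : IsSplit F T c u v h c₁ c₂ a b) {x : γ} (hx : x ∈ c₁ ∪ c₂) :
    x ∈ bigVerts F T :=
  mem_bigVerts_of_mem hs.not_contains (hs.union ▸ hx)

lemma mem_of_adj (hs : IsSplit F T c u v h c₁ c₂ a b) {x y : γ} (hx : x ∈ c₁ ∪ c₂)
    (hxy : F.Adj x y) : y ∈ c₁ ∪ c₂ := by
  rw [hs.union] at hx ⊢
  exact (ConnectedComponent.mem_supp_congr_adj _ hxy).1 hx

lemma cross_right (hs : IsSplit F T c u v h c₁ c₂ a b) {x y : γ} (hx : x ∈ c₂) (hy : y ∉ c₂)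
    (hxy : F.Adj x y) : y = a ∧ x = b :=
  hs.eq_of_adj y ((hs.mem_of_adj (Or.inr hx) hxy).resolve_right hy) x hx hxy.symm

lemma contains_of_two_mem [Fintype γ] [Nonempty β] (hs : IsSplit F T c u v h c₁ c₂ a b) {p m M : ℕ}
    (hm : Fintype.card γ + 1 ≤ m) (hM : 1 + Fintype.card γ ≤ M)
    {G : SimpleGraph ((Fin p ⊕ Fin m) ⊕ Fin M × β)} (hG : unionCopies (joinCore p m) M T ≤ G)
    {w : Fin p} {i : Fin M} (hadj : G.Adj (Sum.inl (Sum.inl w)) (Sum.inr (i, v)))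
    {Z : Finset γ} (hZ : IsBigCover F T Z) (hp : Z.card ≤ p + 1) {q q' : γ} (hqq' : q ≠ q')
    (hq : q ∈ Z) (hq' : q' ∈ Z) (hqc : q ∈ c₂ ∨ q = a) (hqc' : q' ∈ c₂ ∨ q' = a) :
    Contains G F := by
  classical
  let Z' := Z.filter fun x => ¬ (x ∈ c₂ ∨ x = a)
  have hcard : Z'.card + 2 ≤ Z.card := by
    have hdisj : Disjoint Z' {q, q'} := by
      rw [Finset.disjoint_right]
      intro x hx hx'
      have := (Finset.mem_filter.1 hx').2
      rcases Finset.mem_insert.1 hx with rfl | hx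
      · exact this hqc
      · rw [Finset.mem_singleton] at hx
        exact this (hx ▸ hqc')
    rw [← Finset.card_pair hqq', ← Finset.card_union_of_disjoint hdisj]
    refine Finset.card_le_card (Finset.union_subset (Finset.filter_subset _ _) ?_)
    intro x hx
    rcases Finset.mem_insert.1 hx with rfl | hx
    · exact hq
    · exact Finset.mem_singleton.1 hx ▸ hq'
  refine contains_of_joinCore hm hM hG hadj c₂ hs.emb_right a ?_ Z' ?_ (by omega)
    (fun _ => by omega) (Or.inl rfl)
  · intro d hd y hy hdy
    obtain ⟨rfl, rfl⟩ := hs.cross_right hd hy.2 hdy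
    exact ⟨rfl, hs.map_right⟩
  · intro x hx y hy hxy hxa hya
    exact (hZ x y hx.1 hxy).imp
      (fun h' => Finset.mem_filter.2 ⟨h', fun h'' => h''.elim hx.2 hxa⟩)
      (fun h' => Finset.mem_filter.2 ⟨h', fun h'' => h''.elim hy.2 hya⟩)

lemma contains_of_leaf [Fintype γ] [Nonempty β] (hs : IsSplit F T c u v h c₁ c₂ a b)
    {u' v' : β} (hleaf : ∀ w, T.Adj u w → w = u') (hv' : T.Adj v v') {p m M : ℕ}
    (hm : Fintype.card γ + 1 ≤ m) (hM : 1 + Fintype.card γ ≤ M)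
    {G : SimpleGraph ((Fin p ⊕ Fin m) ⊕ Fin M × β)} (hG : unionCopies (joinCore p m) M T ≤ G)
    {w : Fin m} {i : Fin M} (hadj : G.Adj (Sum.inl (Sum.inr w)) (Sum.inr (i, v)))
    {Z : Finset γ} (hZ : IsBigCover F T Z) (hp : Z.card ≤ p + 1) : Contains G F := by
  classical
  have huniq : ∀ x ∈ c₁, ∀ y ∈ c₁, F.Adj a x → F.Adj a y → x = y := by
    have : ∀ x ∈ c₁, F.Adj a x → h x = u' := fun x hx hax => by
      have := hs.emb_left.2 a hs.mem_left x hx hax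
      rw [hs.map_left] at this
      exact hleaf _ this
    intro x hx y hy hax hay
    exact hs.emb_left.1 hx hy ((this x hx hax).trans (this y hy hay).symm)
  have hab : a ∉ c₂ := Set.disjoint_left.1 hs.disjoint hs.mem_left
  have hcross : ∀ d ∈ c₂, ∀ y ∈ bigVerts F T \ c₂, F.Adj d y → y = a ∧ h d = v := by
    intro d hd y hy hdy
    obtain ⟨rfl, rfl⟩ := hs.cross_right hd hy.2 hdy
    exact ⟨rfl, hs.map_right⟩
  have hnba : ∀ y ∈ bigVerts F T \ c₂, F.Adj a y → y ∈ c₁ := fun y hy hay =>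
    (hs.mem_of_adj (Or.inl hs.mem_left) hay).resolve_right hy.2
  by_cases hq : ∃ q ∈ Z, q ∈ c₂
  · obtain ⟨q, hqZ, hqc⟩ := hq
    by_cases haZ : a ∈ Z
    · let A := Finset.univ.filter fun x => x ∈ c₁ ∧ F.Adj a x
      have hA : A.card ≤ 1 := Finset.card_le_one.2 fun x hx y hy => by
        simp only [A, Finset.mem_filter, Finset.mem_univ, true_and] at hx hy
        exact huniq x hx.1 y hy.1 hx.2 hy.2
      have hcard := Finset.card_union_le ((Z.erase q).erase a) A
      have hcard₁ := Finset.card_erase_add_one hqZ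
      have hcard₂ := Finset.card_erase_add_one
        (Finset.mem_erase.2 ⟨fun h' => hab (h' ▸ hqc), haZ⟩ : a ∈ Z.erase q)
      refine contains_of_joinCore hm hM hG hadj c₂ hs.emb_right a hcross
        ((Z.erase q).erase a ∪ A) ?_ (by omega) (by simp) (Or.inr fun y hy hay => ?_)
      · have hmem : ∀ x ∈ bigVerts F T \ c₂, x ≠ a → x ∈ Z → x ∈ (Z.erase q).erase a ∪ A :=
          fun x hx hxa hxZ => Finset.mem_union_left _
            (Finset.mem_erase.2 ⟨hxa, Finset.mem_erase.2 ⟨fun h' => hx.2 (h' ▸ hqc), hxZ⟩⟩)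
        exact fun x hx y hy hxy hxa hya =>
          (hZ x y hx.1 hxy).imp (hmem x hx hxa) (hmem y hy hya)
      · exact Finset.mem_union_right _ (by simpa [A] using ⟨hnba y hy hay, hay⟩)
    · have hcard := Finset.card_erase_add_one hqZ
      have hmem : ∀ x ∈ bigVerts F T \ c₂, x ∈ Z → x ∈ Z.erase q := fun x hx hxZ =>
        Finset.mem_erase.2 ⟨fun h' => hx.2 (h' ▸ hqc), hxZ⟩
      refine contains_of_joinCore hm hM hG hadj c₂ hs.emb_right a hcross
        (Z.erase q) ?_ (by omega) (by simp) (Or.inr fun y hy hay => ?_)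
      · exact fun x hx y hy hxy _ _ => (hZ x y hx.1 hxy).imp (hmem x hx) (hmem y hy)
      · exact hmem y hy ((hZ a y (hs.mem_bigVerts (Or.inl hs.mem_left)) hay).resolve_left haZ)
  · push Not at hq
    have haZ : a ∈ Z := (hZ a b (hs.mem_bigVerts (Or.inl hs.mem_left)) hs.adj).resolve_right
      fun hb => hq b hb hs.mem_right
    have hcard := Finset.card_erase_add_one haZ
    by_cases ha' : ∀ y ∈ c₁, F.Adj a y → y ∈ Z
    · refine contains_of_joinCore hm hM hG hadj c₂ hs.emb_right a hcross
        (Z.erase a) ?_ (by omega) (by simp) (Or.inr fun y hy hay => ?_)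
      · exact fun x hx y hy hxy hxa hya => (hZ x y hx.1 hxy).imp
          (fun h' => Finset.mem_erase.2 ⟨hxa, h'⟩) (fun h' => Finset.mem_erase.2 ⟨hya, h'⟩)
      · exact Finset.mem_erase.2 ⟨hay.ne', ha' y (hnba y hy hay) hay⟩
    · push Not at ha'
      obtain ⟨a', ha'₁, haa', ha'Z⟩ := ha'
      have hb : ∀ y, F.Adj b y → y = a := fun y hby => by
        have hyZ : y ∈ Z := (hZ b y (hs.mem_bigVerts (Or.inr hs.mem_right)) hby).resolve_left
          fun h' => hq b h' hs.mem_right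
        exact (hs.cross_right hs.mem_right (hq y hyZ) hby).1
      have hc₂ : ∀ y ∈ c₂, F.Adj a y → y = b := fun y hy hay =>
        (hs.eq_of_adj a hs.mem_left y hy hay).2
      have hne : a ≠ b := hs.adj.ne
      refine contains_of_joinCore (h := fun x => if x = a then v else v') hm hM hG hadj {a, b}
        ⟨?_, ?_⟩ a' ?_ (Z.erase a) ?_ (by omega) (by simp) (Or.inr fun y hy hay => ?_)
      · rintro x (rfl | rfl) y (rfl | rfl) hxy
        · rfl
        · simp only [if_true, hne.symm, if_false] at hxy
          exact (hv'.ne hxy).elim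
        · simp only [if_true, hne.symm, if_false] at hxy
          exact (hv'.ne hxy.symm).elim
        · rfl
      · rintro x (rfl | rfl) y (rfl | rfl) hxy
        · exact (F.loopless.irrefl _ hxy).elim
        · simpa only [if_true, hne.symm, if_false] using hv'
        · simpa only [if_true, hne.symm, if_false] using hv'.symm
        · exact (F.loopless.irrefl _ hxy).elim
      · rintro d (rfl | rfl) y hy hdy
        · refine ⟨?_, if_pos rfl⟩
          rcases hs.mem_of_adj (Or.inl hs.mem_left) hdy with hy' | hy'
          · exact huniq y hy' a' ha'₁ hdy haa'
          · exact (hy.2 (Or.inr (hc₂ y hy' hdy))).elim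
        · exact (hy.2 (Or.inl (hb y hdy))).elim
      · exact fun x hx y hy hxy _ _ => (hZ x y hx.1 hxy).imp
          (fun h' => Finset.mem_erase.2 ⟨fun h'' => hx.2 (Or.inl h''), h'⟩)
          (fun h' => Finset.mem_erase.2 ⟨fun h'' => hy.2 (Or.inl h''), h'⟩)
      · exact Finset.mem_erase.2 ⟨fun h'' => hy.2 (Or.inl h''),
          (hZ a' y (hs.mem_bigVerts (Or.inl ha'₁)) hay).resolve_left ha'Z⟩

end IsSplit

lemma exists_saturated_blueprint_of_forall_not_star {nF t : ℕ} {F : SimpleGraph (Fin nF)}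
    {T : SimpleGraph (Fin t)} (hT : GoodTree F t T)
    (hstar : ∀ c : F.ConnectedComponent, ¬ Contains T (SimpleGraph.induce c.supp F) →
      ∀ z ∈ c.supp, ∃ a b, a ∈ c.supp ∧ F.Adj a b ∧ a ≠ z ∧ b ≠ z) {r : ℕ} (hr : r < t) :
    ∃ (nH : ℕ) (H : SimpleGraph (Fin nH)), nH % t = r ∧
      ∃ K : ℕ, ∀ k : ℕ, K ≤ k → SatSingle F (unionCopies H k T) := by
  classical
  have : Nonempty (Fin t) := ⟨⟨r, hr⟩⟩
  obtain ⟨Z, hZ, hmin⟩ : ∃ Z, IsBigCover F T Z ∧ ∀ Z', IsBigCover F T Z' → Z.card ≤ Z'.card := by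
    obtain ⟨Z, hZ, hmin⟩ := Finset.exists_min_image (Finset.univ.filter (IsBigCover F T))
      Finset.card ⟨Finset.univ, by simp [IsBigCover]⟩
    exact ⟨Z, (Finset.mem_filter.1 hZ).2, fun Z' hZ' => hmin Z' (by simpa using hZ')⟩
  have hsplit : ∀ u v, ∃ c h c₁ c₂ a b, IsSplit F T c u v h c₁ c₂ a b := fun u v => by
    obtain ⟨c, hc, hcT⟩ := hT.2.2 u v
    exact ⟨c, exists_isSplit hc hcT⟩
  have hmeet : ∀ c : F.ConnectedComponent, ¬ Contains T (SimpleGraph.induce c.supp F) →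
      ∀ z ∈ c.supp, ∃ q ∈ Z, q ∈ c.supp ∧ q ≠ z := fun c hc z hz => by
    obtain ⟨a, b, ha, hab, haz, hbz⟩ := hstar c hc z hz
    rcases hZ a b (mem_bigVerts_of_mem hc ha) hab with h | h
    · exact ⟨a, h, ha, haz⟩
    · exact ⟨b, h, (ConnectedComponent.mem_supp_congr_adj _ hab).1 ha, hbz⟩
  have hZcard : ∀ c : F.ConnectedComponent, ¬ Contains T (SimpleGraph.induce c.supp F) →
      (Z.filter (· ∉ c.supp)).card + 1 ≤ Z.card := fun c hc => by
    obtain ⟨z, hz⟩ := c.nonempty_supp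
    obtain ⟨q, hq, hqc, -⟩ := hmeet c hc z hz
    exact Finset.card_lt_card (Finset.filter_ssubset.2 ⟨q, hq, not_not.2 hqc⟩)
  have hZpos : 0 < Z.card := by
    obtain ⟨c, h, c₁, c₂, a, b, hs⟩ := hsplit ⟨r, hr⟩ ⟨r, hr⟩
    have := hZcard c hs.not_contains
    omega
  have hnontriv : Nontrivial (Fin t) := by
    by_contra htriv
    rw [not_nontrivial_iff_subsingleton] at htriv
    obtain ⟨c, h, c₁, c₂, a, b, hs⟩ := hsplit ⟨r, hr⟩ ⟨r, hr⟩
    obtain ⟨x, y, hx, hxy, hxa, hya⟩ := hstar c hs.not_contains a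
      (hs.union ▸ Or.inl hs.mem_left)
    rw [← hs.union] at hx
    have hmem : ∀ x ∈ c₁ ∪ c₂, x ≠ a → x ∈ c₂ := fun x hx hxa => hx.resolve_left fun hx₁ =>
      hxa (hs.emb_left.1 hx₁ hs.mem_left (Subsingleton.elim _ _))
    exact hxy.ne (hs.emb_right.1 (hmem x hx hxa) (hmem y (hs.mem_of_adj hx hxy) hya)
      (Subsingleton.elim _ _))
  obtain ⟨m, hm, hmod⟩ := exists_ge_add_mod_eq (Z.card - 1) (nF + 1) hr
  have hm' : Fintype.card (Fin nF) + 1 ≤ m := by simpa using hm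
  have hres := exists_saturated_blueprint_of_core (F := F) (T := T)
    (H₀ := joinCore (Z.card - 1) m) (nF + 2) 1 ?_ ?_ ?_
  · simpa [hmod] using hres
  · rintro M ⟨f, hf⟩
    let Z' : Finset (Fin nF) := Finset.univ.filter fun x => ∃ k, f x = Sum.inl (Sum.inl k)
    have hle : Z'.card ≤ Z.card - 1 :=
      card_le_of_map_inl_inl (f := f) fun x hx => (Finset.mem_filter.1 hx).2
    have := hmin Z' fun x y hx hxy => ?_
    · omega
    obtain ⟨x', hx'⟩ := exists_inl_of_mem_bigVerts hf hx
    obtain ⟨y', hy'⟩ := exists_inl_of_mem_bigVerts hf (mem_bigVerts_of_adj hxy hx)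
    have hadj := hf x y hxy
    rw [hx', hy', unionCopies_adj_inl_inl] at hadj
    refine hadj.2.imp (fun h => ?_) (fun h => ?_)
    · obtain ⟨k, rfl⟩ := Sum.isLeft_iff.1 h
      exact Finset.mem_filter.2 ⟨Finset.mem_univ _, k, hx'⟩
    · obtain ⟨k, rfl⟩ := Sum.isLeft_iff.1 h
      exact Finset.mem_filter.2 ⟨Finset.mem_univ _, k, hy'⟩
  · intro M hM G hG x y hxy hne
    refine contains_of_adj_copies hT (fun c hc => ?_) hM hG hxy hne
    have hcard := hZcard c hc
    obtain ⟨ψ, hinj, -, hψ⟩ := exists_injective_sum_avoiding (p := Z.card - 1) (m := m)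
      (Z.filter (· ∉ c.supp)) (Sum.inr ⟨0, by omega⟩) hm' (by omega) (by simp)
    refine ⟨ψ, hinj.injOn, fun a ha b hb hab => ⟨fun h => hab.ne (hinj h), ?_⟩⟩
    exact (hZ a b ha.1 hab).imp (fun h => (hψ a).2 (Finset.mem_filter.2 ⟨h, ha.2⟩))
      (fun h => (hψ b).2 (Finset.mem_filter.2 ⟨h, hb.2⟩))
  · intro M hM G hG v u S hS hadj
    have hM' : 1 + Fintype.card (Fin nF) ≤ M := by
      rw [Fintype.card_fin]
      omega
    obtain ⟨i, hi⟩ := Finset.card_pos.1 hS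
    replace hadj := hadj i hi
    rcases v with v | v
    · obtain ⟨c, h, c₁, c₂, a, b, hs⟩ := hsplit u u
      obtain ⟨z, hzZ, hz⟩ : ∃ z ∈ Z, z = a ∨ z = b := by
        rcases hZ a b (hs.mem_bigVerts (Or.inl hs.mem_left)) hs.adj with h' | h'
        · exact ⟨a, h', Or.inl rfl⟩
        · exact ⟨b, h', Or.inr rfl⟩
      have hzc : z ∈ c.supp := by
        rw [← hs.union]
        rcases hz with rfl | rfl
        · exact Or.inl hs.mem_left
        · exact Or.inr hs.mem_right
      obtain ⟨q, hqZ, hqc, hqz⟩ := hmeet c hs.not_contains z hzc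
      rw [← hs.union] at hqc
      rcases hqc with hq | hq
      · refine hs.symm.contains_of_two_mem hm' hM' hG hadj hZ (by omega) hqz hqZ hzZ (Or.inl hq) ?_
        exact hz.imp (fun h' : z = a => h' ▸ hs.mem_left) id
      · refine hs.contains_of_two_mem hm' hM' hG hadj hZ (by omega) hqz hqZ hzZ (Or.inl hq) ?_
        exact hz.symm.imp (fun h' : z = b => h' ▸ hs.mem_right) id
    · obtain ⟨l, hl⟩ := hT.1.exists_vert_degree_one_of_nontrivial
      obtain ⟨l', -, hl'⟩ := degree_eq_one_iff_existsUnique_adj.1 hl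
      obtain ⟨u', hu'⟩ := hT.1.connected.preconnected.exists_adj_of_nontrivial u
      obtain ⟨c, h, c₁, c₂, a, b, hs⟩ := hsplit l u
      exact hs.contains_of_leaf hl' hu' hm' hM' hG hadj hZ (by omega)

end Cores
/-- Key lemma: if every `T+e` and every `2T+e` contains a connected component of `F` not
contained in `T`, then every residue class `C` modulo `|T|` contains `|V(H)|` for some
`F`-saturated blueprint `(H,T)`. -/
theorem stmt13 {nF t : ℕ} (F : SimpleGraph (Fin nF)) (hF : 1 ≤ Nat.card F.edgeSet)
    (T : SimpleGraph (Fin t)) (hT : GoodTree F t T) :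
    ∀ c : ℕ, c < t → ∃ (nH : ℕ) (H : SimpleGraph (Fin nH)), nH % t = c ∧
      ∃ K : ℕ, ∀ k : ℕ, K ≤ k → SatSingle F (unionCopies H k T) := by
  intro r hr
  by_cases h : ∃ c : F.ConnectedComponent, ¬ Contains T (SimpleGraph.induce c.supp F) ∧
      ∃ z ∈ c.supp, ∀ a b, a ∈ c.supp → F.Adj a b → a = z ∨ b = z
  · obtain ⟨c, hc, z, hzc, hz⟩ := h
    exact exists_saturated_blueprint_of_star hT hc hzc hz hr
  · refine exists_saturated_blueprint_of_forall_not_star hT (fun c hc z hz => ?_) hr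
    by_contra! hno
    refine h ⟨c, hc, z, hz, fun a b ha hab => ?_⟩
    by_contra! hne
    exact hne.2 (hno a b ha hab hne.1)
end

section
/- Let 𝓕 be a non-empty family of finite graphs, each having at least one edge, and let H be a finite graph with no isolated vertices. For each integer j ≥ 0 let H_j denote the graph obtained from H by adding j isolated vertices. If 2 ≤ k ≤ ℓ ≤ m are integers such that H_k and H_m are both 𝓕-saturated, then H_ℓ is 𝓕-saturated. -/
open SimpleGraph Filter Topology

/-- A family of finite graphs, each given on a vertex set `Fin n`. -/
abbrev GraphFam := Set ((n : ℕ) × SimpleGraph (Fin n))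

/-- `G` is `𝓕`-saturated: `G` contains no member of `𝓕`, but adding any missing edge to `G`
creates a member of `𝓕`. -/
def FamSaturated (𝓕 : GraphFam) {α : Type*} (G : SimpleGraph α) : Prop :=
  (∀ F ∈ 𝓕, ¬ Contains G F.2) ∧
    ∀ u v : α, u ≠ v → ¬ G.Adj u v →
      ∃ F ∈ 𝓕, Contains (G ⊔ SimpleGraph.fromEdgeSet {s(u, v)}) F.2

/-- `sat n 𝓕` is the minimum number of edges in an `𝓕`-saturated graph on `n` vertices. -/
noncomputable def sat (n : ℕ) (𝓕 : GraphFam) : ℕ :=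
  sInf {m | ∃ G : SimpleGraph (Fin n), FamSaturated 𝓕 G ∧ Nat.card G.edgeSet = m}

theorem Contains.trans {α β γ : Type*} {G : SimpleGraph α} {K : SimpleGraph β}
    {F : SimpleGraph γ} (hGK : Contains G K) (hKF : Contains K F) : Contains G F := by
  obtain ⟨f, hf⟩ := hGK
  obtain ⟨g, hg⟩ := hKF
  exact ⟨g.trans f, fun a b hab => hf _ _ (hg a b hab)⟩

theorem disjUnionG_bot_adj_map {α β γ : Type*} (H : SimpleGraph α) (g : β ↪ γ) (x y : α ⊕ β) :
    (disjUnionG H (⊥ : SimpleGraph γ)).Adj (Sum.map id g x) (Sum.map id g y) ↔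
      (disjUnionG H (⊥ : SimpleGraph β)).Adj x y := by
  rcases x with x | x <;> rcases y with y | y <;> simp [disjUnionG]

/-- An injection of the isolated vertices respects the addition of an edge. -/
theorem contains_disjUnionG_bot_sup_edge {α β γ : Type*} (H : SimpleGraph α) (g : β ↪ γ)
    (u v : α ⊕ β) :
    Contains (disjUnionG H (⊥ : SimpleGraph γ) ⊔
        SimpleGraph.fromEdgeSet {s(Sum.map id g u, Sum.map id g v)})
      (disjUnionG H (⊥ : SimpleGraph β) ⊔ SimpleGraph.fromEdgeSet {s(u, v)}) := by
  have hinj : Function.Injective (Sum.map (id : α → α) g) :=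
    Function.injective_id.sumMap g.injective
  refine ⟨⟨_, hinj⟩, fun a b hab => ?_⟩
  rw [SimpleGraph.sup_adj] at hab ⊢
  refine hab.imp (disjUnionG_bot_adj_map H g a b).2 fun h => ?_
  simp only [SimpleGraph.fromEdgeSet_adj, Set.mem_singleton_iff, Function.Embedding.coeFn_mk]
    at h ⊢
  exact ⟨by simpa using congrArg (Sym2.map (Sum.map id g)) h.1, hinj.ne h.2⟩

theorem contains_disjUnionG_bot {α β γ : Type*} (H : SimpleGraph α) (g : β ↪ γ) :
    Contains (disjUnionG H (⊥ : SimpleGraph γ)) (disjUnionG H (⊥ : SimpleGraph β)) :=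
  ⟨⟨_, Function.injective_id.sumMap g.injective⟩,
    fun a b => (disjUnionG_bot_adj_map H g a b).2⟩

theorem exists_embedding_fin_range_superset {k ℓ : ℕ} (hkl : k ≤ ℓ) (s : Finset (Fin ℓ))
    (hs : s.card ≤ k) : ∃ g : Fin k ↪ Fin ℓ, ∀ a ∈ s, a ∈ Set.range g := by
  obtain ⟨t, hst, ht⟩ := Finset.exists_superset_card_eq hs (by simpa using hkl)
  exact ⟨(t.orderEmbOfFin ht).toEmbedding, fun a ha => by
    simpa using hst ha⟩

theorem exists_embedding_fin_sum_map_eq {α : Type*} {k ℓ : ℕ} (hk : 2 ≤ k) (hkl : k ≤ ℓ)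
    (u v : α ⊕ Fin ℓ) :
    ∃ (g : Fin k ↪ Fin ℓ) (u' v' : α ⊕ Fin k), Sum.map id g u' = u ∧ Sum.map id g v' = v := by
  have lift (g : Fin k ↪ Fin ℓ) (w : α ⊕ Fin ℓ) (hw : ∀ a, w = Sum.inr a → a ∈ Set.range g) :
      ∃ w' : α ⊕ Fin k, Sum.map id g w' = w := by
    rcases w with w | w
    · exact ⟨Sum.inl w, rfl⟩
    · obtain ⟨b, rfl⟩ := hw w rfl
      exact ⟨Sum.inr b, rfl⟩
  let z : Fin ℓ := ⟨0, by omega⟩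
  obtain ⟨g, hg⟩ := exists_embedding_fin_range_superset hkl
    {u.elim (fun _ => z) id, v.elim (fun _ => z) id} (Finset.card_le_two.trans hk)
  obtain ⟨u', hu⟩ := lift g u fun a ha => hg a (by simp [ha])
  obtain ⟨v', hv⟩ := lift g v fun a ha => hg a (by simp [ha])
  exact ⟨g, u', v', hu, hv⟩

/-- If `H` has no isolated vertices and `H` plus `k` isolated vertices and `H` plus `m` isolated
vertices are both `𝓕`-saturated, where `2 ≤ k ≤ ℓ ≤ m`, then `H` plus `ℓ` isolated vertices is
`𝓕`-saturated. -/
theorem stmt15 (𝓕 : GraphFam) (h1 : 𝓕.Nonempty) (h2 : ∀ F ∈ 𝓕, 1 ≤ Nat.card F.2.edgeSet)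
    {nH : ℕ} (H : SimpleGraph (Fin nH)) (hiso : ∀ v, (H.neighborSet v).Nonempty)
    (k ℓ m : ℕ) (hk : 2 ≤ k) (hkl : k ≤ ℓ) (hlm : ℓ ≤ m)
    (hsatk : FamSaturated 𝓕 (disjUnionG H (⊥ : SimpleGraph (Fin k))))
    (hsatm : FamSaturated 𝓕 (disjUnionG H (⊥ : SimpleGraph (Fin m)))) :
    FamSaturated 𝓕 (disjUnionG H (⊥ : SimpleGraph (Fin ℓ))) := by
  refine ⟨fun F hF hc => hsatm.1 F hF
    ((contains_disjUnionG_bot H (Fin.castLEEmb hlm)).trans hc), fun u v huv hadj => ?_⟩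
  obtain ⟨g, u, v, rfl, rfl⟩ := exists_embedding_fin_sum_map_eq hk hkl u v
  obtain ⟨F, hF, hc⟩ := hsatk.2 u v (fun h => huv (congrArg _ h))
    (fun h => hadj ((disjUnionG_bot_adj_map H g u v).2 h))
  exact ⟨F, hF, (contains_disjUnionG_bot_sup_edge H g u v).trans hc⟩
end

section
/- Let 𝓕 be a non-empty quasi-finite family of finite graphs, each having at least one edge. Then for every integer r ≥ 1 there is a constant C_r such that every 𝓕-saturated graph G on n vertices that is not isomorphic to H ∪ kT for any 𝓕-saturated blueprint (H,T) with |V(T)| < r and any integer k ≥ 0 has at least (1 − 1/r)·n − C_r edges. -/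
open SimpleGraph Filter Topology

/-- `𝓕` is quasi-finite: for every tree `T` there is a constant `C` such that every graph in `𝓕`
has at most `C` connected components isomorphic to `T`. -/
def QuasiFinite (𝓕 : GraphFam) : Prop :=
  ∀ (t : ℕ) (T : SimpleGraph (Fin t)), T.IsTree →
    ∃ C : ℕ, ∀ F ∈ 𝓕,
      Nat.card {c : F.2.ConnectedComponent // Nonempty (SimpleGraph.induce c.supp F.2 ≃g T)} ≤ C

/-- `C` is a residue class modulo `r`, viewed as a subset of the non-negative integers. -/
def ResidueClass (r : ℕ) (C : Set ℕ) : Prop := ∃ c < r, C = {n : ℕ | n % r = c}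

section Auxiliary

/-- Trees on `Fin t` for some `t < r`. -/
abbrev SmallTree (r : ℕ) : Type := Σ t : Fin r, {T : SimpleGraph (Fin t) // T.IsTree}

/-- The connected components of `G` that are isomorphic to `T`. -/
abbrev ComponentIso {α β : Type*} (G : SimpleGraph α) (T : SimpleGraph β) : Type _ :=
  {c : G.ConnectedComponent // Nonempty (SimpleGraph.induce c.supp G ≃g T)}

/-- The connected components of `G` that are trees with fewer than `r` vertices. -/
abbrev SmallTreeComponent {α : Type*} (G : SimpleGraph α) (r : ℕ) : Type _ :=
  {c : G.ConnectedComponent // (SimpleGraph.induce c.supp G).IsTree ∧ Nat.card c.supp < r}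

theorem SmallTree.exists_iso {α : Type*} [Finite α] {G : SimpleGraph α} {r : ℕ}
    (hG : G.IsTree) (hr : Nat.card α < r) : ∃ s : SmallTree r, Nonempty (G ≃g s.2.1) := by
  have := Fintype.ofFinite α
  rw [Nat.card_eq_fintype_card] at hr
  exact ⟨⟨⟨_, hr⟩, G.overFin rfl, (G.overFinIso rfl).isTree_iff.1 hG⟩, ⟨G.overFinIso rfl⟩⟩

theorem card_smallTreeComponent_le {α : Type*} [Finite α] (G : SimpleGraph α) (r : ℕ)
    [Fintype (SmallTree r)] :
    Nat.card (SmallTreeComponent G r) ≤ ∑ s : SmallTree r, Nat.card (ComponentIso G s.2.1) := by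
  rw [← Nat.card_sigma]
  choose s hs using fun c : SmallTreeComponent G r => SmallTree.exists_iso c.2.1 c.2.2
  refine Nat.card_le_card_of_injective
    (fun c => (⟨s c, c.1, hs c⟩ : Σ s : SmallTree r, ComponentIso G s.2.1)) ?_
  intro c d h
  have := congrArg (fun x : Σ s : SmallTree r, ComponentIso G s.2.1 => x.2.1) h
  exact Subtype.ext this

theorem sum_card_edgeSet_component_le {α : Type*} [Finite α] (G : SimpleGraph α)
    [Fintype G.ConnectedComponent] :
    ∑ c : G.ConnectedComponent, Nat.card (G.induce c.supp).edgeSet ≤ Nat.card G.edgeSet := by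
  rw [← Nat.card_sigma]
  refine Nat.card_le_card_of_injective
    (fun x : Σ c : G.ConnectedComponent, (G.induce c.supp).edgeSet =>
      (SimpleGraph.Embedding.induce x.1.supp).mapEdgeSet x.2) ?_
  rintro ⟨c, e⟩ ⟨d, f⟩ h
  have hcd : c = d := by
    have h' := congrArg Subtype.val h
    obtain ⟨e, he⟩ := e
    obtain ⟨f, hf⟩ := f
    induction e using Sym2.ind with | _ a b =>
    induction f using Sym2.ind with | _ a' b' =>
    have ha := a.2
    have ha' := a'.2
    have hb' := b'.2
    simp only [SimpleGraph.ConnectedComponent.mem_supp_iff] at ha ha' hb'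
    simp only [Embedding.mapEdgeSet, Hom.mapEdgeSet, Function.Embedding.coeFn_mk,
      Sym2.map_mk, Sym2.eq_iff] at h'
    rcases h' with ⟨h', -⟩ | ⟨h', -⟩
    · exact ha.symm.trans ((congrArg G.connectedComponentMk h').trans ha')
    · exact ha.symm.trans ((congrArg G.connectedComponentMk h').trans hb')
  subst hcd
  exact congrArg (Sigma.mk c)
    ((SimpleGraph.Embedding.induce (G := G) c.supp).mapEdgeSet.injective h)

theorem sum_card_component_supp {α : Type*} [Finite α] (G : SimpleGraph α)
    [Fintype G.ConnectedComponent] :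
    ∑ c : G.ConnectedComponent, Nat.card c.supp = Nat.card α := by
  rw [← Nat.card_sigma]
  exact Nat.card_congr (Equiv.sigmaFiberEquiv G.connectedComponentMk)

/-- Every component other than a tree on fewer than `r` vertices has edge density
at least `1 - 1/r`. -/
theorem le_card_edgeSet_add_card_smallTreeComponent {α : Type*} [Finite α] (G : SimpleGraph α)
    {r : ℕ} (hr : 1 ≤ r) :
    (1 - 1 / (r : ℝ)) * Nat.card α - Nat.card (SmallTreeComponent G r) ≤
      (Nat.card G.edgeSet : ℝ) := by
  classical
  have := Fintype.ofFinite G.ConnectedComponent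
  have hr0 : (1 : ℝ) ≤ r := by exact_mod_cast hr
  have hcount : Nat.card (SmallTreeComponent G r) = ∑ c : G.ConnectedComponent,
      if (G.induce c.supp).IsTree ∧ Nat.card c.supp < r then 1 else 0 := by
    rw [Nat.card_eq_fintype_card, Fintype.card_subtype, Finset.card_filter]
  have hcomp : ∀ c : G.ConnectedComponent, (1 - 1 / (r : ℝ)) * Nat.card c.supp -
      ((if (G.induce c.supp).IsTree ∧ Nat.card c.supp < r then 1 else 0 : ℕ) : ℝ) ≤
        (Nat.card (G.induce c.supp).edgeSet : ℝ) := by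
    intro c
    have hconn : (G.induce c.supp).Connected := c.connected_toSimpleGraph
    have hle := hconn.card_vert_le_card_edgeSet_add_one
    have hle' : (Nat.card c.supp : ℝ) ≤ Nat.card (G.induce c.supp).edgeSet + 1 := by
      exact_mod_cast hle
    have hfrac : 0 ≤ 1 / (r : ℝ) * Nat.card c.supp := by positivity
    split_ifs with h
    · push_cast
      linarith
    · push_cast
      by_cases htree : (G.induce c.supp).IsTree
      · have hbig : (r : ℝ) ≤ Nat.card c.supp := by
          exact_mod_cast not_lt.1 fun hlt => h ⟨htree, hlt⟩
        have : 1 ≤ 1 / (r : ℝ) * Nat.card c.supp := by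
          rw [one_div, inv_mul_eq_div, one_le_div (by linarith)]
          exact hbig
        linarith
      · have hne : Nat.card (G.induce c.supp).edgeSet + 1 ≠ Nat.card c.supp := fun he =>
          htree (isTree_iff_connected_and_card.2 ⟨hconn, he⟩)
        have : (Nat.card c.supp : ℝ) ≤ Nat.card (G.induce c.supp).edgeSet := by
          exact_mod_cast (show Nat.card c.supp ≤ Nat.card (G.induce c.supp).edgeSet by omega)
        linarith
  have hsum := Finset.sum_le_sum fun c (_ : c ∈ Finset.univ) => hcomp c
  rw [Finset.sum_sub_distrib, ← Finset.mul_sum, ← Nat.cast_sum, ← Nat.cast_sum, ← Nat.cast_sum,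
    sum_card_component_supp, ← hcount] at hsum
  exact hsum.trans (by exact_mod_cast sum_card_edgeSet_component_le G)

@[simp]
theorem unionCopies_adj_inl {α β : Type*} (H : SimpleGraph α) (k : ℕ) (T : SimpleGraph β)
    (a b : α) : (unionCopies H k T).Adj (Sum.inl a) (Sum.inl b) ↔ H.Adj a b := by
  simp only [unionCopies, fromRel_adj, ne_eq, Sum.inl.injEq, H.adj_comm b a, or_self,
    and_iff_right_iff_imp]
  exact fun h => h.ne

@[simp]
theorem unionCopies_adj_inr {α β : Type*} (H : SimpleGraph α) (k : ℕ) (T : SimpleGraph β)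
    (x y : Fin k × β) :
    (unionCopies H k T).Adj (Sum.inr x) (Sum.inr y) ↔ x.1 = y.1 ∧ T.Adj x.2 y.2 := by
  obtain ⟨i, a⟩ := x
  obtain ⟨j, b⟩ := y
  simp only [unionCopies, fromRel_adj, ne_eq, Sum.inr.injEq, T.adj_comm b a, Prod.mk.injEq,
    eq_comm (a := j), or_self, and_iff_right_iff_imp]
  exact fun h h' => h.2.ne h'.2

@[simp]
theorem not_unionCopies_adj_inl_inr {α β : Type*} (H : SimpleGraph α) (k : ℕ)
    (T : SimpleGraph β) (a : α) (x : Fin k × β) :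
    ¬ (unionCopies H k T).Adj (Sum.inl a) (Sum.inr x) := by
  simp [unionCopies]

@[simp]
theorem not_unionCopies_adj_inr_inl {α β : Type*} (H : SimpleGraph α) (k : ℕ)
    (T : SimpleGraph β) (a : α) (x : Fin k × β) :
    ¬ (unionCopies H k T).Adj (Sum.inr x) (Sum.inl a) := by
  simp [unionCopies]

/-- Relabel the copies of `T` in `H ∪ kT`. -/
def relabelCopies {α β : Type*} {k l : ℕ} (σ : Fin k → Fin l) :
    α ⊕ Fin k × β → α ⊕ Fin l × β :=
  Sum.map id (Prod.map σ id)

theorem relabelCopies_adj {α β : Type*} {H : SimpleGraph α} {T : SimpleGraph β} {k l : ℕ}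
    (σ : Fin k → Fin l) {x y : α ⊕ Fin k × β} (h : (unionCopies H k T).Adj x y) :
    (unionCopies H l T).Adj (relabelCopies σ x) (relabelCopies σ y) := by
  rcases x with a | ⟨i, a⟩ <;> rcases y with b | ⟨j, b⟩ <;> simp_all [relabelCopies]

theorem relabelCopies_injective {α β : Type*} {k l : ℕ} {σ : Fin k → Fin l}
    (hσ : Function.Injective σ) :
    Function.Injective (relabelCopies σ : α ⊕ Fin k × β → α ⊕ Fin l × β) :=
  Function.injective_id.sumMap (hσ.prodMap Function.injective_id)

/-- The copy of `T` in which a vertex of `H ∪ kT` lies, if any. -/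
def copyIndex {α β : Type*} {k : ℕ} : α ⊕ Fin k × β → Option (Fin k) :=
  Sum.elim (fun _ => none) fun x => some x.1

theorem copyIndex_eq_of_adj {α β : Type*} {H : SimpleGraph α} {T : SimpleGraph β} {k : ℕ}
    {x y : α ⊕ Fin k × β} (h : (unionCopies H k T).Adj x y) : copyIndex x = copyIndex y := by
  rcases x with a | ⟨i, a⟩ <;> rcases y with b | ⟨j, b⟩ <;> simp_all [copyIndex]

theorem copyIndex_eq_of_reachable {α β γ : Type*} {H : SimpleGraph α} {T : SimpleGraph β} {k : ℕ}
    {F : SimpleGraph γ} {f : γ → α ⊕ Fin k × β}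
    (hf : ∀ a b, F.Adj a b → (unionCopies H k T).Adj (f a) (f b)) {a b : γ}
    (h : F.Reachable a b) : copyIndex (f a) = copyIndex (f b) := by
  obtain ⟨w⟩ := h
  induction w with
  | nil => rfl
  | cons h _ ih => exact (copyIndex_eq_of_adj (hf _ _ h)).trans ih

/-- A component of `F` mapped into a copy of the tree `T` is itself a small tree. -/
theorem isTree_component_of_copyIndex {α β γ : Type*} [Finite β] {H : SimpleGraph α}
    {T : SimpleGraph β} (hT : T.IsTree) {k : ℕ} {F : SimpleGraph γ} (f : γ ↪ α ⊕ Fin k × β)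
    (hf : ∀ a b, F.Adj a b → (unionCopies H k T).Adj (f a) (f b)) {v : γ} {i : Fin k}
    (hv : copyIndex (f v) = some i) :
    (F.induce (F.connectedComponentMk v).supp).IsTree ∧
      Nat.card (F.connectedComponentMk v).supp ≤ Nat.card β := by
  have hlift : ∀ u : (F.connectedComponentMk v).supp, ∃ b, f u = Sum.inr (i, b) := by
    intro u
    have hu := copyIndex_eq_of_reachable hf (ConnectedComponent.exact u.2)
    rw [hv] at hu
    rcases hfu : f u with a | ⟨j, b⟩ <;> simp_all [copyIndex]
  choose g hg using hlift
  have hinj : Function.Injective g := fun u w h =>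
    Subtype.ext (f.injective (by rw [hg, hg, h]))
  refine ⟨⟨ConnectedComponent.connected_toSimpleGraph _, IsAcyclic.comap ⟨g, ?_⟩ hinj
    hT.isAcyclic⟩, Nat.card_le_card_of_injective g hinj⟩
  intro u w h
  have := hf _ _ h
  change (unionCopies H k T).Adj (f u) (f w) at this
  rw [hg, hg, unionCopies_adj_inr] at this
  exact this.2

theorem exists_injOn_fin {k l : ℕ} (I : Set (Fin l)) (hI : Nat.card I ≤ k) (hk : 0 < k) :
    ∃ σ : Fin l → Fin k, Set.InjOn σ I := by
  classical
  have : Nonempty (I ↪ Fin k) := by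
    rw [Function.Embedding.nonempty_iff_card_le, Fintype.card_fin, ← Nat.card_eq_fintype_card]
    exact hI
  obtain ⟨e⟩ := this
  refine ⟨fun x => if h : x ∈ I then e ⟨x, h⟩ else ⟨0, hk⟩, fun x hx y hy h => ?_⟩
  simp only [hx, hy, dif_pos] at h
  exact congrArg Subtype.val (e.injective h)

/-- A graph with few small tree components that is contained in `H ∪ lT` is already contained
in `H ∪ kT`. -/
theorem contains_unionCopies_of_card_smallTreeComponent_le {α β γ : Type*} [Finite β] [Finite γ]
    {H : SimpleGraph α} {T : SimpleGraph β} (hT : T.IsTree) {r k l : ℕ} (hr : Nat.card β < r)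
    {F : SimpleGraph γ} (hF : Nat.card (SmallTreeComponent F r) ≤ k) (hk : 0 < k)
    (h : Contains (unionCopies H l T) F) : Contains (unionCopies H k T) F := by
  obtain ⟨f, hf⟩ := h
  let I : Set (Fin l) := {i | ∃ v, copyIndex (f v) = some i}
  have hI : Nat.card I ≤ k := by
    choose v hv using fun i : I => i.2
    refine le_trans (Nat.card_le_card_of_injective
      (fun i => (⟨F.connectedComponentMk (v i),
        (isTree_component_of_copyIndex hT f hf (hv i)).1,
        (isTree_component_of_copyIndex hT f hf (hv i)).2.trans_lt hr⟩ :
          SmallTreeComponent F r)) ?_) hF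
    intro i j hij
    have hreach := ConnectedComponent.exact (congrArg Subtype.val hij)
    have := copyIndex_eq_of_reachable hf hreach
    rw [hv, hv] at this
    exact Subtype.ext (Option.some.inj this)
  obtain ⟨σ, hσ⟩ := exists_injOn_fin I hI hk
  refine ⟨⟨fun v => relabelCopies σ (f v), fun v w hvw => f.injective ?_⟩,
    fun a b hab => relabelCopies_adj σ (hf a b hab)⟩
  have hmem : ∀ v i b, f v = Sum.inr (i, b) → i ∈ I := fun v i b h => ⟨v, by simp [h, copyIndex]⟩
  rcases hv : f v with a | ⟨i, a⟩ <;> rcases hw : f w with b | ⟨j, b⟩ <;>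
    simp_all [relabelCopies]
  exact hσ (hmem _ _ _ hv) (hmem _ _ _ hw) hvw.1

theorem exists_embedding_fin_mem_range {k l : ℕ} (hk : 2 ≤ k) (hkl : k ≤ l) (i j : Fin l) :
    ∃ τ : Fin k ↪ Fin l, i ∈ Set.range τ ∧ j ∈ Set.range τ := by
  classical
  obtain ⟨s, hs, -, hcard⟩ := Finset.exists_subsuperset_card_eq (Finset.subset_univ {i, j})
    (Finset.card_le_two.trans hk) (by simpa using hkl)
  refine ⟨(s.orderEmbOfFin hcard).toEmbedding, ?_, ?_⟩ <;>
  · change _ ∈ Set.range (s.orderEmbOfFin hcard)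
    rw [Finset.range_orderEmbOfFin]
    exact hs (by simp)

theorem exists_relabelCopies_eq {α β : Type*} {k l : ℕ} (hk : 2 ≤ k) (hkl : k ≤ l)
    (x y : α ⊕ Fin l × β) : ∃ (τ : Fin k ↪ Fin l) (x' y' : α ⊕ Fin k × β),
      relabelCopies τ x' = x ∧ relabelCopies τ y' = y := by
  have i₀ : Fin l := ⟨0, by omega⟩
  obtain ⟨τ, ⟨i, hi⟩, j, hj⟩ := exists_embedding_fin_mem_range hk hkl
    ((copyIndex x).getD i₀) ((copyIndex y).getD i₀)
  refine ⟨τ, Sum.map id (fun p => (i, p.2)) x, Sum.map id (fun p => (j, p.2)) y, ?_, ?_⟩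
  · rcases x with a | ⟨p, a⟩ <;> simp_all [relabelCopies, copyIndex]
  · rcases y with a | ⟨p, a⟩ <;> simp_all [relabelCopies, copyIndex]

theorem Contains.of_hom {α α' β : Type*} {G : SimpleGraph α} {G' : SimpleGraph α'}
    {F : SimpleGraph β} (h : Contains G F) (f : α → α') (hf : Function.Injective f)
    (hadj : ∀ a b, G.Adj a b → G'.Adj (f a) (f b)) : Contains G' F := by
  obtain ⟨e, he⟩ := h
  exact ⟨e.trans ⟨f, hf⟩, fun a b hab => hadj _ _ (he a b hab)⟩

theorem Contains.of_hom_sup_edge {α α' β : Type*} {G : SimpleGraph α} {G' : SimpleGraph α'}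
    {F : SimpleGraph β} {u v : α} (h : Contains (G ⊔ fromEdgeSet {s(u, v)}) F) (f : α → α')
    (hf : Function.Injective f) (hadj : ∀ a b, G.Adj a b → G'.Adj (f a) (f b)) :
    Contains (G' ⊔ fromEdgeSet {s(f u, f v)}) F := by
  refine h.of_hom f hf fun a b hab => ?_
  simp only [sup_adj, fromEdgeSet_adj, Set.mem_singleton_iff, Sym2.eq_iff, ne_eq, hf.eq_iff]
    at hab ⊢
  exact hab.imp_left (hadj a b)

theorem FamSaturated.iso {𝓕 : GraphFam} {α α' : Type*} {G : SimpleGraph α} {G' : SimpleGraph α'}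
    (h : FamSaturated 𝓕 G) (e : G ≃g G') : FamSaturated 𝓕 G' := by
  refine ⟨fun F hF hc => h.1 F hF (hc.of_hom e.symm e.symm.injective fun a b hab =>
    e.symm.map_adj_iff.2 hab), fun u v huv hadj => ?_⟩
  obtain ⟨F, hF, hc⟩ := h.2 (e.symm u) (e.symm v) (e.symm.injective.ne huv)
    (fun h' => hadj (e.symm.map_adj_iff.1 h'))
  have := hc.of_hom_sup_edge (G' := G') e e.injective fun a b hab => e.map_adj_iff.2 hab
  rw [e.apply_symm_apply, e.apply_symm_apply] at this
  exact ⟨F, hF, this⟩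

/-- If every member of `𝓕` has at most `k` small tree components, then saturation of `H ∪ kT`
propagates to all larger numbers of copies. -/
theorem FamSaturated.unionCopies_of_le {𝓕 : GraphFam} {α β : Type*} [Finite β]
    {H : SimpleGraph α} {T : SimpleGraph β} (hT : T.IsTree) {r k l : ℕ} (hr : Nat.card β < r)
    (hF : ∀ F ∈ 𝓕, Nat.card (SmallTreeComponent F.2 r) ≤ k) (hk : 2 ≤ k) (hkl : k ≤ l)
    (h : FamSaturated 𝓕 (unionCopies H k T)) : FamSaturated 𝓕 (unionCopies H l T) := by
  refine ⟨fun F hF' hc => h.1 F hF' (contains_unionCopies_of_card_smallTreeComponent_le hT hr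
    (hF F hF') (by omega) hc), fun u v huv hadj => ?_⟩
  obtain ⟨τ, u, v, rfl, rfl⟩ := exists_relabelCopies_eq hk hkl u v
  obtain ⟨F, hF', hc⟩ := h.2 u v (fun h' => huv (congrArg _ h'))
    fun h' => hadj (relabelCopies_adj τ h')
  exact ⟨F, hF', hc.of_hom_sup_edge _ (relabelCopies_injective τ.injective)
    fun a b hab => relabelCopies_adj τ hab⟩

/-- Splitting off all components isomorphic to `T`. -/
theorem exists_iso_unionCopies {α β : Type*} [Finite α] (G : SimpleGraph α)
    (T : SimpleGraph β) : ∃ (m : ℕ) (H : SimpleGraph (Fin m)),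
      Nonempty (G ≃g unionCopies H (Nat.card (ComponentIso G T)) T) := by
  let A : Set α := {v | ¬ Nonempty (G.induce (G.connectedComponentMk v).supp ≃g T)}
  let eA : A ≃ Fin (Nat.card A) := Finite.equivFin A
  let eC : ComponentIso G T ≃ Fin (Nat.card (ComponentIso G T)) := Finite.equivFin _
  let φ : ∀ c : ComponentIso G T, G.induce c.1.supp ≃g T := fun c => c.2.some
  let f : Fin (Nat.card A) ⊕ Fin (Nat.card (ComponentIso G T)) × β → α :=
    Sum.elim (fun a => (eA.symm a).1) fun x => ((φ (eC.symm x.1)).symm x.2).1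
  have hcomp : ∀ i b, G.connectedComponentMk (f (Sum.inr (i, b))) = (eC.symm i).1 :=
    fun i b => ((φ (eC.symm i)).symm b).2
  have hA : ∀ a, ¬ Nonempty (G.induce (G.connectedComponentMk (f (Sum.inl a))).supp ≃g T) :=
    fun a => (eA.symm a).2
  have hne : ∀ a i b,
      G.connectedComponentMk (f (Sum.inl a)) ≠ G.connectedComponentMk (f (Sum.inr (i, b))) := by
    intro a i b h
    have := hA a
    rw [h, hcomp] at this
    exact this (eC.symm i).2
  have hidx : ∀ i a j b, G.connectedComponentMk (f (Sum.inr (i, a))) =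
      G.connectedComponentMk (f (Sum.inr (j, b))) → i = j := by
    intro i a j b h
    rw [hcomp, hcomp] at h
    exact eC.symm.injective (Subtype.ext h)
  have hinj : Function.Injective f := by
    rintro (a | ⟨i, a⟩) (b | ⟨j, b⟩) h
    · exact congrArg _ (eA.symm.injective (Subtype.ext h))
    · exact (hne _ _ _ (congrArg _ h)).elim
    · exact (hne _ _ _ (congrArg _ h.symm)).elim
    · obtain rfl := hidx _ _ _ _ (congrArg _ h)
      exact congrArg (fun b => Sum.inr (i, b)) ((φ (eC.symm i)).symm.injective (Subtype.ext h))
  have hsurj : Function.Surjective f := by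
    intro v
    by_cases hv : v ∈ A
    · exact ⟨Sum.inl (eA ⟨v, hv⟩), congrArg Subtype.val (eA.symm_apply_apply ⟨v, hv⟩)⟩
    · let c : ComponentIso G T := ⟨G.connectedComponentMk v, not_not.1 hv⟩
      refine ⟨Sum.inr (eC c, φ c ⟨v, rfl⟩), ?_⟩
      simp only [f, Sum.elim_inr]
      rw [eC.symm_apply_apply, (φ c).symm_apply_apply]
  let H : SimpleGraph (Fin (Nat.card A)) := G.comap fun a => f (Sum.inl a)
  have hadj : ∀ x y, G.Adj (f x) (f y) ↔
      (unionCopies H (Nat.card (ComponentIso G T)) T).Adj x y := by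
    rintro (a | ⟨i, a⟩) (b | ⟨j, b⟩)
    · rw [unionCopies_adj_inl]
      exact Iff.rfl
    · exact iff_of_false
        (fun h => hne _ _ _ (ConnectedComponent.connectedComponentMk_eq_of_adj h))
        (not_unionCopies_adj_inl_inr _ _ _ _ _)
    · exact iff_of_false
        (fun h => hne _ _ _ (ConnectedComponent.connectedComponentMk_eq_of_adj h).symm)
        (not_unionCopies_adj_inr_inl _ _ _ _ _)
    · rw [unionCopies_adj_inr]
      constructor
      · intro h
        obtain rfl := hidx _ _ _ _ (ConnectedComponent.connectedComponentMk_eq_of_adj h)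
        exact ⟨rfl, (φ (eC.symm i)).symm.map_adj_iff.1 h⟩
      · rintro ⟨rfl, h⟩
        exact (φ (eC.symm i)).symm.map_adj_iff.2 h
  exact ⟨Nat.card A, H, ⟨RelIso.symm ⟨Equiv.ofBijective f ⟨hinj, hsurj⟩, hadj _ _⟩⟩⟩

theorem QuasiFinite.exists_card_smallTreeComponent_le {𝓕 : GraphFam} (h : QuasiFinite 𝓕)
    (r : ℕ) : ∃ M : ℕ, ∀ F ∈ 𝓕, Nat.card (SmallTreeComponent F.2 r) ≤ M := by
  have := Fintype.ofFinite (SmallTree r)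
  choose C hC using fun s : SmallTree r => h s.1 s.2.1 s.2.2
  exact ⟨∑ s, C s, fun F hF => (card_smallTreeComponent_le F.2 r).trans
    (Finset.sum_le_sum fun s _ => hC s F hF)⟩

end Auxiliary

/-- For a quasi-finite family `𝓕` and every `r ≥ 1` there is a constant `C_r` such that every
`𝓕`-saturated graph on `n` vertices which is not of the form `H ∪ kT` for an `𝓕`-saturated
blueprint `(H,T)` with `|V(T)| < r` (i.e. `T` a tree on fewer than `r` vertices such that
`H ∪ k'T` is `𝓕`-saturated for all sufficiently large `k'`) has at least `(1 - 1/r)·n - C_r`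
edges. -/
theorem stmt17 (𝓕 : GraphFam) (h1 : 𝓕.Nonempty) (h2 : ∀ F ∈ 𝓕, 1 ≤ Nat.card F.2.edgeSet)
    (h3 : QuasiFinite 𝓕) :
    ∀ r : ℕ, 1 ≤ r → ∃ C : ℝ, ∀ (n : ℕ) (G : SimpleGraph (Fin n)),
      FamSaturated 𝓕 G →
      (¬ ∃ (t : ℕ) (T : SimpleGraph (Fin t)) (nH : ℕ) (H : SimpleGraph (Fin nH)) (k : ℕ),
        t < r ∧ T.IsTree ∧
          (∃ K : ℕ, ∀ k' : ℕ, K ≤ k' → FamSaturated 𝓕 (unionCopies H k' T)) ∧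
          Nonempty (G ≃g unionCopies H k T)) →
      (1 - 1 / (r : ℝ)) * n - C ≤ (Nat.card G.edgeSet : ℝ) := by
  intro r hr
  have := Fintype.ofFinite (SmallTree r)
  obtain ⟨M, hM⟩ := h3.exists_card_smallTreeComponent_le r
  refine ⟨(∑ _s : SmallTree r, (M + 2) : ℕ), fun n G hG hblue => ?_⟩
  have hfew : ∀ s : SmallTree r, Nat.card (ComponentIso G s.2.1) ≤ M + 2 := by
    rintro ⟨t, T, hT⟩
    by_contra! hlt
    obtain ⟨m, H, ⟨e⟩⟩ := exists_iso_unionCopies G T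
    exact hblue ⟨t, T, m, H, _, t.2, hT, ⟨_, fun k' hk' =>
      (hG.iso e).unionCopies_of_le hT (r := r) (by simp)
        (fun F hF => (hM F hF).trans (by simp only at hlt; omega))
        (by simp only at hlt; omega) hk'⟩, ⟨e⟩⟩
  have hcount : (Nat.card (SmallTreeComponent G r) : ℝ) ≤
      (∑ _s : SmallTree r, (M + 2) : ℕ) := by
    exact_mod_cast (card_smallTreeComponent_le G r).trans
      (Finset.sum_le_sum fun s _ => hfew s)
  have hedges := le_card_edgeSet_add_card_smallTreeComponent G hr
  rw [Nat.card_fin] at hedges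
  linarith
end
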